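/- arXiv:2008.00361 — 2 statements merged into one kernel-verified Lean document; each statement's English description precedes it below -/
import Mathlib

section
/- For all integers k ≥ 1, s ≥ 0, r ≥ 0 with s even, r odd and s + r < k, GR_k((k−s−r)P3, sK3, rH3) = ⌊32·5^((s−2)/2)⌋·17^((r−1)/2) + 1, where ⌊32·5^((s−2)/2)⌋ denotes the floor of the real number 32·5^((s−2)/2) (so it equals 32·5^((s−2)/2) when s ≥ 2, and equals 6 when s = 0). -/
open SimpleGraph

/-- A rainbow triangle in an edge-coloring of a complete graph: three distinct
vertices whose three pairwise edges receive three pairwise distinct colors. -/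
def HasRainbowTriangle {n k : ℕ} (c : Fin n → Fin n → Fin k) : Prop :=
  ∃ u v w : Fin n, u ≠ v ∧ u ≠ w ∧ v ≠ w ∧
    c u v ≠ c u w ∧ c u v ≠ c v w ∧ c u w ≠ c v w

/-- A Gallai `k`-coloring of `K_n`: a symmetric edge-coloring with no rainbow triangle. -/
def IsGallaiColoring {n k : ℕ} (c : Fin n → Fin n → Fin k) : Prop :=
  (∀ u v, c u v = c v u) ∧ ¬ HasRainbowTriangle c

/-- A monochromatic copy of the graph `F` in color `i`: an injection of the vertices
of `F` into the vertices of `K_n` mapping every edge of `F` to an edge colored `i`. -/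
def HasMonoCopy {V : Type} (F : SimpleGraph V) {n k : ℕ}
    (c : Fin n → Fin n → Fin k) (i : Fin k) : Prop :=
  ∃ f : V → Fin n, Function.Injective f ∧ ∀ a b, F.Adj a b → c (f a) (f b) = i

/-- The Gallai-Ramsey number `GR(F₁, …, F_k)`: the least `n` such that every Gallai
`k`-coloring of `K_n` contains, for some color `i`, a monochromatic copy of `Fᵢ`
in color `i`. -/
noncomputable def GR (k : ℕ) (F : Fin k → Σ V : Type, SimpleGraph V) : ℕ :=
  sInf {n : ℕ | ∀ c : Fin n → Fin n → Fin k, IsGallaiColoring c →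
    ∃ i : Fin k, HasMonoCopy (F i).2 c i}

/-- The triangle `K₃`. -/
def GK3 : SimpleGraph (Fin 3) := ⊤

/-- The path `P₃` on three vertices (edges 0–1 and 1–2). -/
def GP3 : SimpleGraph (Fin 3) := SimpleGraph.fromRel (fun a _ => a = 1)

/-- `H₁`: a `K₄` on `{0,1,2,3}` together with the extra vertex `4` adjacent to
exactly the vertex `3`. -/
def GH1 : SimpleGraph (Fin 5) :=
  SimpleGraph.fromRel (fun a b => (a ≠ 4 ∧ b ≠ 4) ∨ (a = 3 ∧ b = 4))

/-- `H₂`: `K₅` minus the two edges 0–1 and 1–2 of a path on three vertices. -/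
def GH2 : SimpleGraph (Fin 5) :=
  (⊤ : SimpleGraph (Fin 5)) \
    SimpleGraph.fromRel (fun a b => (a = 0 ∧ b = 1) ∨ (a = 1 ∧ b = 2))

/-- `H₃`: `K₅` minus the edge 0–1. -/
def GH3 : SimpleGraph (Fin 5) :=
  (⊤ : SimpleGraph (Fin 5)) \ SimpleGraph.fromRel (fun a b => a = 0 ∧ b = 1)
/-- The family of graphs for `GR_k((k-s-r)P₃, sK₃, rH₃)`: the graph `H₃` in each of
the first `r` colors, the triangle `K₃` in each of the next `s` colors, and the path
`P₃` in each of the remaining `k - s - r` colors. -/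
def mixPKH (k s r : ℕ) : Fin k → Σ V : Type, SimpleGraph V :=
  fun i =>
    if (i : ℕ) < r then ⟨Fin 5, GH3⟩
    else if (i : ℕ) < r + s then ⟨Fin 3, GK3⟩
    else ⟨Fin 3, GP3⟩

section GRaux
set_option linter.unusedSectionVars false
set_option linter.unusedVariables false

variable {V κ : Type} [DecidableEq V] [DecidableEq κ]

/-- Symmetric colouring without rainbow triangles inside `X`. -/
def GalOn (c : V → V → κ) (X : Finset V) : Prop :=
  (∀ u v, c u v = c v u) ∧ ∀ u ∈ X, ∀ v ∈ X, ∀ w ∈ X, u ≠ v → u ≠ w → v ≠ w →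
    c u v = c u w ∨ c u v = c v w ∨ c u w = c v w

/-- Neighbourhood of `v` in colour `i` inside `X`. -/
def nbh (c : V → V → κ) (i : κ) (X : Finset V) (v : V) : Finset V :=
  X.filter (fun w => w ≠ v ∧ c v w = i)

/-- `MFree c i n X`: no copy of `K_{n+2}` minus an edge in colour `i` inside `X`. -/
def MFree (c : V → V → κ) (i : κ) : ℕ → Finset V → Prop
  | 0, X => X.card ≤ 1
  | n + 1, X => ∀ v ∈ X, MFree c i n (nbh c i X v)

def NoEdge (c : V → V → κ) (i : κ) (X : Finset V) : Prop :=
  ∀ x ∈ X, ∀ y ∈ X, x ≠ y → c x y ≠ i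

variable {c : V → V → κ} {i red blue : κ} {X Y A B : Finset V} {n : ℕ}

lemma GalOn.mono (h : GalOn c Y) (hXY : X ⊆ Y) : GalOn c X :=
  ⟨h.1, fun u hu v hv w hw => h.2 u (hXY hu) v (hXY hv) w (hXY hw)⟩

lemma mem_nbh {v w : V} : w ∈ nbh c i X v ↔ w ∈ X ∧ w ≠ v ∧ c v w = i := by
  simp [nbh]

lemma nbh_subset (v : V) : nbh c i X v ⊆ X := Finset.filter_subset _ _

lemma MFree.mono : ∀ {n : ℕ} {X Y : Finset V}, MFree c i n Y → X ⊆ Y → MFree c i n X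
  | 0, X, Y, h, hXY => (Finset.card_le_card hXY).trans h
  | n + 1, X, Y, h, hXY => fun v hv => (h v (hXY hv)).mono (by
      intro w hw
      rw [mem_nbh] at hw ⊢
      exact ⟨hXY hw.1, hw.2⟩)

lemma MFree.succ (h : MFree c i n X) : MFree c i (n + 1) X := fun v _ => h.mono (nbh_subset v)

lemma MFree.step (h : MFree c i (n + 1) X) {b : V} (hb : b ∈ X) (hA : A ⊆ X)
    (hj : ∀ a ∈ A, a ≠ b ∧ c b a = i) : MFree c i n A :=
  (h b hb).mono (fun a ha => mem_nbh.2 ⟨hA ha, hj a ha⟩)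

lemma NoEdge.free (h : NoEdge c i X) : MFree c i 1 X := by
  intro v hv
  have : nbh c i X v = ∅ := by
    ext w
    simp only [mem_nbh, Finset.notMem_empty, iff_false]
    rintro ⟨hw, hne, hc⟩
    exact h v hv w hw hne.symm hc
  rw [this]; simp [MFree]

lemma NoEdge.mono (h : NoEdge c i Y) (hXY : X ⊆ Y) : NoEdge c i X :=
  fun x hx y hy => h x (hXY hx) y (hXY hy)

/-- Level-1 freeness spelled out. -/
lemma MFree.one (h : MFree c i 1 X) {a b d : V} (ha : a ∈ X) (hb : b ∈ X) (hd : d ∈ X)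
    (hab : a ≠ b) (hdb : d ≠ b) (h1 : c b a = i) (h2 : c b d = i) : a = d :=
  Finset.card_le_one.1 (h b hb) a (mem_nbh.2 ⟨ha, hab, h1⟩) d (mem_nbh.2 ⟨hd, hdb, h2⟩)

/-- The vertices joined to `v` by a colour not in `K`. -/
def mates (c : V → V → κ) (K : Finset κ) (X : Finset V) (v : V) : Finset V :=
  X.filter (fun w => w ≠ v ∧ c v w ∉ K)

lemma mates_le (hG : GalOn c X) (K : Finset κ) (hP : ∀ i, i ∉ K → MFree c i 1 X) {v : V}
    (hv : v ∈ X) : (mates c K X v).card ≤ 1 := by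
  rw [Finset.card_le_one]
  intro a ha b hb
  simp only [mates, Finset.mem_filter] at ha hb
  by_contra hab
  obtain ⟨ha, hav, haK⟩ := ha
  obtain ⟨hb, hbv, hbK⟩ := hb
  rcases hG.2 v hv a ha b hb hav.symm hbv.symm hab with h | h | h
  · exact hab ((hP _ haK).one ha hv hb hav hbv rfl h.symm)
  · exact hbv.symm ((hP _ haK).one hv ha hb hav.symm (Ne.symm hab) (hG.1 _ _) h.symm)
  · exact hav.symm ((hP _ hbK).one hv hb ha hbv.symm hab (hG.1 _ _) (by rw [h]; exact hG.1 _ _))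

lemma deg1 {v : V} : X.card ≤ 1 + (mates c {red} X v).card + (nbh c red X v).card := by
  have : X ⊆ insert v (mates c {red} X v ∪ nbh c red X v) := by
    intro w hw
    simp only [mates, nbh, Finset.mem_insert, Finset.mem_union, Finset.mem_filter,
      Finset.mem_singleton]
    tauto
  have h1 := Finset.card_le_card this
  have h2 := Finset.card_insert_le v (mates c {red} X v ∪ nbh c red X v)
  have h3 := Finset.card_union_le (mates c {red} X v) (nbh c red X v)
  omega

lemma deg2 {v : V} : X.card ≤ 1 + (mates c {red, blue} X v).card + (nbh c red X v).card
    + (nbh c blue X v).card := by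
  have : X ⊆ insert v (mates c {red, blue} X v ∪ (nbh c red X v ∪ nbh c blue X v)) := by
    intro w hw
    simp only [mates, nbh, Finset.mem_insert, Finset.mem_union, Finset.mem_filter,
      Finset.mem_singleton]
    tauto
  have h1 := Finset.card_le_card this
  have h2 := Finset.card_insert_le v (mates c {red, blue} X v ∪ (nbh c red X v ∪ nbh c blue X v))
  have h3 := Finset.card_union_le (mates c {red, blue} X v) (nbh c red X v ∪ nbh c blue X v)
  have h4 := Finset.card_union_le (nbh c red X v) (nbh c blue X v)
  omega

lemma sm11 (hG : GalOn c X) (hP : ∀ i, MFree c i 1 X) : X.card ≤ 2 := by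
  by_contra hcon
  obtain ⟨v, hv⟩ := Finset.card_pos.1 (by omega : 0 < X.card)
  have h1 := mates_le hG ∅ (fun i _ => hP i) hv
  have : X ⊆ insert v (mates c ∅ X v) := by
    intro w hw
    simp only [mates, Finset.mem_insert, Finset.mem_filter, Finset.notMem_empty]
    tauto
  have h2 := Finset.card_le_card this
  have h3 := Finset.card_insert_le v (mates c ∅ X v)
  omega

lemma sm_one {a N : ℕ} (hG : GalOn c X) (hP : ∀ i, i ≠ red → MFree c i 1 X)
    (hr : MFree c red (a + 1) X)
    (hN : ∀ Y ⊆ X, MFree c red a Y → Y.card ≤ N) : X.card ≤ 2 + N := by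
  rcases X.eq_empty_or_nonempty with rfl | ⟨v, hv⟩
  · simp
  have h1 := mates_le hG {red} (fun i hi => hP i (by simpa using hi)) hv
  have h2 := hN _ (nbh_subset v) (hr v hv)
  have h3 := deg1 (c := c) (red := red) (X := X) (v := v)
  omega

lemma sm21 (hG : GalOn c X) (hP : ∀ i, i ≠ red → MFree c i 1 X) (hr : MFree c red 2 X) :
    X.card ≤ 4 :=
  sm_one (N := 2) hG hP hr (fun Y hY h => sm11 (hG.mono hY) (fun i => by
    by_cases hi : i = red
    · exact hi ▸ h
    · exact (hP i hi).mono hY))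

lemma sm31 (hG : GalOn c X) (hP : ∀ i, i ≠ red → MFree c i 1 X) (hr : MFree c red 3 X) :
    X.card ≤ 6 :=
  sm_one (N := 4) hG hP hr (fun Y hY h => sm21 (hG.mono hY)
    (fun i hi => (hP i hi).mono hY) h)

lemma sm22_nb (hG : GalOn c X) (hP : ∀ i, i ≠ red → i ≠ blue → MFree c i 1 X)
    (hr : MFree c red 2 X) (hb : MFree c blue 2 X) {v : V} (hv : v ∈ X) :
    X.card ≤ 9 + (mates c {red, blue} X v).card := by
  have h1 : (nbh c red X v).card ≤ 4 :=
    sm21 (red := blue) (hG.mono (nbh_subset v)) (fun i hi => by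
      by_cases hir : i = red
      · exact hir ▸ hr v hv
      · exact (hP i hir hi).mono (nbh_subset v)) (hb.mono (nbh_subset v))
  have h2 : (nbh c blue X v).card ≤ 4 :=
    sm21 (red := red) (hG.mono (nbh_subset v)) (fun i hi => by
      by_cases hir : i = blue
      · exact hir ▸ hb v hv
      · exact (hP i hi hir).mono (nbh_subset v)) (hr.mono (nbh_subset v))
  have h3 := deg2 (c := c) (red := red) (blue := blue) (X := X) (v := v)
  omega

lemma mates2_le (hG : GalOn c X) (hP : ∀ i, i ≠ red → i ≠ blue → MFree c i 1 X) {v : V}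
    (hv : v ∈ X) : (mates c {red, blue} X v).card ≤ 1 :=
  mates_le hG {red, blue} (fun i hi => by
    simp only [Finset.mem_insert, Finset.mem_singleton, not_or] at hi
    exact hP i hi.1 hi.2) hv

lemma sm22 (hG : GalOn c X) (hP : ∀ i, i ≠ red → i ≠ blue → MFree c i 1 X)
    (hr : MFree c red 2 X) (hb : MFree c blue 2 X) : X.card ≤ 10 := by
  rcases X.eq_empty_or_nonempty with rfl | ⟨v, hv⟩
  · simp
  have h1 := sm22_nb hG hP hr hb hv
  have h2 := mates2_le hG hP hv
  omega

lemma r33 (R : V → V → Prop) (hR : ∀ x y, R x y → R y x) (hY : 6 ≤ Y.card) :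
    ∃ x ∈ Y, ∃ y ∈ Y, ∃ z ∈ Y, x ≠ y ∧ x ≠ z ∧ y ≠ z ∧
      ((R x y ∧ R x z ∧ R y z) ∨ (¬ R x y ∧ ¬ R x z ∧ ¬ R y z)) := by
  classical
  obtain ⟨v, hv⟩ := Finset.card_pos.1 (by omega : 0 < Y.card)
  have h1 : (Y.erase v).card = Y.card - 1 := Finset.card_erase_of_mem hv
  have h2 := Finset.card_filter_add_card_filter_not (s := Y.erase v) (fun w => R v w)
  have h3 : 2 < ((Y.erase v).filter (fun w => R v w)).card ∨
    2 < ((Y.erase v).filter (fun w => ¬ R v w)).card := by omega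
  rcases h3 with h3 | h3
  · obtain ⟨a, b, d, ha, hb, hd, hab, had, hbd⟩ := Finset.two_lt_card_iff.1 h3
    simp only [Finset.mem_filter, Finset.mem_erase] at ha hb hd
    by_cases k1 : R a b
    · exact ⟨v, hv, a, ha.1.2, b, hb.1.2, by tauto, by tauto, hab, by tauto⟩
    by_cases k2 : R a d
    · exact ⟨v, hv, a, ha.1.2, d, hd.1.2, by tauto, by tauto, had, by tauto⟩
    by_cases k3 : R b d
    · exact ⟨v, hv, b, hb.1.2, d, hd.1.2, by tauto, by tauto, hbd, by tauto⟩
    exact ⟨a, ha.1.2, b, hb.1.2, d, hd.1.2, hab, had, hbd, by tauto⟩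
  · obtain ⟨a, b, d, ha, hb, hd, hab, had, hbd⟩ := Finset.two_lt_card_iff.1 h3
    simp only [Finset.mem_filter, Finset.mem_erase] at ha hb hd
    by_cases k1 : ¬ R a b
    · exact ⟨v, hv, a, ha.1.2, b, hb.1.2, by tauto, by tauto, hab, by tauto⟩
    by_cases k2 : ¬ R a d
    · exact ⟨v, hv, a, ha.1.2, d, hd.1.2, by tauto, by tauto, had, by tauto⟩
    by_cases k3 : ¬ R b d
    · exact ⟨v, hv, b, hb.1.2, d, hd.1.2, by tauto, by tauto, hbd, by tauto⟩
    exact ⟨a, ha.1.2, b, hb.1.2, d, hd.1.2, hab, had, hbd, by tauto⟩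

/-- `R(3,4) ≤ 9`. -/
lemma r34 (R : V → V → Prop) (hR : ∀ x y, R x y → R y x) (hY : 9 ≤ Y.card) :
    (∃ x ∈ Y, ∃ y ∈ Y, ∃ z ∈ Y, x ≠ y ∧ x ≠ z ∧ y ≠ z ∧ R x y ∧ R x z ∧ R y z) ∨
    (∃ x ∈ Y, ∃ y ∈ Y, ∃ z ∈ Y, ∃ w ∈ Y, x ≠ y ∧ x ≠ z ∧ x ≠ w ∧ y ≠ z ∧ y ≠ w ∧ z ≠ w ∧
      ¬ R x y ∧ ¬ R x z ∧ ¬ R x w ∧ ¬ R y z ∧ ¬ R y w ∧ ¬ R z w) := by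
  classical
  by_contra hcon
  push Not at hcon
  obtain ⟨hT, hK⟩ := hcon
  obtain ⟨Z, hZY, hZ⟩ := Finset.exists_subset_card_eq hY
  have hdeg : ∀ v ∈ Z, ((Z.erase v).filter (fun w => R v w)).card = 3 := by
    intro v hv
    have h1 : (Z.erase v).card = Z.card - 1 := Finset.card_erase_of_mem hv
    have h2 := Finset.card_filter_add_card_filter_not (s := Z.erase v) (fun w => R v w)
    have h3 : ((Z.erase v).filter (fun w => R v w)).card < 4 := by
      by_contra h4
      obtain ⟨Q, hQ, hQc⟩ := Finset.exists_subset_card_eq (not_lt.1 h4)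
      have hq : ∀ a ∈ Q, a ∈ Y ∧ a ≠ v ∧ R v a := by
        intro a ha
        have := hQ ha
        simp only [Finset.mem_filter, Finset.mem_erase] at this
        exact ⟨hZY this.1.2, this.1.1, this.2⟩
      have hn : ∀ a ∈ Q, ∀ b ∈ Q, a ≠ b → ¬ R a b := fun a ha b hb hab =>
        hT v (hZY hv) a (hq a ha).1 b (hq b hb).1 (hq a ha).2.1.symm (hq b hb).2.1.symm hab
          (hq a ha).2.2 (hq b hb).2.2
      obtain ⟨x, y, z, w, hxy, hxz, hxw, hyz, hyw, hzw, rfl⟩ := Finset.card_eq_four.1 hQc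
      exact hn z (by simp) w (by simp) hzw
        (hK x (hq x (by simp)).1 y (hq y (by simp)).1 z (hq z (by simp)).1 w (hq w (by simp)).1
          hxy hxz hxw hyz hyw hzw (hn x (by simp) y (by simp) hxy) (hn x (by simp) z (by simp) hxz)
          (hn x (by simp) w (by simp) hxw) (hn y (by simp) z (by simp) hyz)
          (hn y (by simp) w (by simp) hyw))
    have h4 : ((Z.erase v).filter (fun w => ¬ R v w)).card < 6 := by
      by_contra h4
      obtain ⟨x, hx, y, hy, z, hz, hxy, hxz, hyz, h⟩ := r33 R hR (not_lt.1 h4)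
      simp only [Finset.mem_filter, Finset.mem_erase] at hx hy hz
      rcases h with h | h
      · exact hT x (hZY hx.1.2) y (hZY hy.1.2) z (hZY hz.1.2) hxy hxz hyz h.1 h.2.1 h.2.2
      · exact h.2.2 (hK v (hZY hv) x (hZY hx.1.2) y (hZY hy.1.2) z (hZY hz.1.2)
          hx.1.1.symm hy.1.1.symm hz.1.1.symm hxy hxz hyz hx.2 hy.2 hz.2 h.1 h.2.1)
    omega
  let G : SimpleGraph Z :=
    { Adj := fun a b => a ≠ b ∧ R a b
      symm := ⟨fun a b h => ⟨h.1.symm, hR _ _ h.2⟩⟩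
      loopless := ⟨fun a h => h.1 rfl⟩ }
  have hd : ∀ v : Z, G.degree v = 3 := by
    intro v
    rw [← hdeg v v.2, ← SimpleGraph.card_neighborFinset_eq_degree]
    refine Finset.card_bij (fun a _ => (a : V)) ?_ ?_ ?_
    · intro a ha
      simp only [SimpleGraph.mem_neighborFinset, G] at ha
      simp only [Finset.mem_filter, Finset.mem_erase]
      exact ⟨⟨fun h => ha.1 (Subtype.ext h.symm), a.2⟩, ha.2⟩
    · intro a _ b _ h
      exact Subtype.ext h
    · intro b hb
      simp only [Finset.mem_filter, Finset.mem_erase] at hb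
      refine ⟨⟨b, hb.1.2⟩, ?_, rfl⟩
      simp only [SimpleGraph.mem_neighborFinset, G]
      exact ⟨fun h => hb.1.1 (by rw [h]), hb.2⟩
  have hs := G.sum_degrees_eq_twice_card_edges
  simp only [hd, Finset.sum_const, Finset.card_univ, Fintype.card_coe, hZ] at hs
  simp at hs
  omega


/-- A mate of `x` (joined by a level-1 colour) behaves as a twin of `x`. -/
lemma twin (hG : GalOn c X) (hP : ∀ i, i ≠ red → i ≠ blue → MFree c i 1 X) {x x' y : V}
    (hx : x ∈ X) (hx' : x' ∈ mates c {red, blue} X x) (hy : y ∈ X) (hyx : y ≠ x)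
    (hc : c x y = red ∨ c x y = blue) : x' ≠ y ∧ c x' y = c x y := by
  simp only [mates, Finset.mem_filter, Finset.mem_insert, Finset.mem_singleton, not_or] at hx'
  obtain ⟨hxX, hne, h1, h2⟩ := hx'
  have hx'y : x' ≠ y := by
    rintro rfl
    tauto
  refine ⟨hx'y, ?_⟩
  rcases hG.2 x hx x' hxX y hy hne.symm hyx.symm hx'y with h | h | h
  · rw [h] at h1 h2
    tauto
  · exact absurd ((hP _ h1 h2).one hx hxX hy hne.symm hx'y.symm (hG.1 _ _) h.symm) hyx.symm
  · exact h.symm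

lemma sm32 (hrb : red ≠ blue) (hG : GalOn c X)
    (hP : ∀ i, i ≠ red → i ≠ blue → MFree c i 1 X)
    (hr : MFree c red 2 X) (hb : MFree c blue 3 X) : X.card ≤ 16 := by
  classical
  by_contra hcon
  have hmate : ∀ v ∈ X, (mates c {red, blue} X v).card ≤ 1 := fun v hv => mates2_le hG hP hv
  have hred : ∀ v ∈ X, (nbh c red X v).card ≤ 6 := fun v hv =>
    sm31 (red := blue) (hG.mono (nbh_subset v)) (fun i hi => by
      by_cases hir : i = red
      · exact hir ▸ hr v hv
      · exact (hP i hir hi).mono (nbh_subset v)) (hb.mono (nbh_subset v))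
  have hPb : ∀ v ∈ X, ∀ i, i ≠ red → i ≠ blue → MFree c i 1 (nbh c blue X v) :=
    fun v hv i h1 h2 => (hP i h1 h2).mono (nbh_subset v)
  -- the vertices without mates
  set T := X.filter (fun v => (mates c {red, blue} X v).card = 0) with hTdef
  set S := X.filter (fun v => ¬ (mates c {red, blue} X v).card = 0) with hSdef
  have hST : T.card + S.card = X.card := Finset.card_filter_add_card_filter_not _
  have hTred : ∀ u ∈ T, ∀ v ∈ T, u ≠ v → c u v = red := by
    intro u hu v hv huv
    rw [hTdef, Finset.mem_filter] at hu hv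
    have hd := deg2 (c := c) (red := red) (blue := blue) (X := X) (v := u)
    by_contra hne
    have hblue : c u v = blue := by
      by_contra hne2
      have : v ∈ mates c {red, blue} X u := by
        simp only [mates, Finset.mem_filter, Finset.mem_insert, Finset.mem_singleton, not_or]
        exact ⟨hv.1, huv.symm, hne, hne2⟩
      rw [Finset.card_eq_zero.1 hu.2] at this
      simp at this
    have hvn : v ∈ nbh c blue X u := mem_nbh.2 ⟨hv.1, huv.symm, hblue⟩
    have h9 := sm22_nb (hG.mono (nbh_subset u)) (hPb u hu.1) (hr.mono (nbh_subset u))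
      (hb u hu.1) hvn
    have h0 : (mates c {red, blue} (nbh c blue X u) v).card ≤ (mates c {red, blue} X v).card :=
      Finset.card_le_card (Finset.filter_subset_filter _ (nbh_subset u))
    have := hred u hu.1
    omega
  have hT3 : T.card ≤ 3 := by
    by_contra hT4
    obtain ⟨Q, hQ, hQc⟩ := Finset.exists_subset_card_eq (by omega : 4 ≤ T.card)
    obtain ⟨x, y, z, w, hxy, hxz, hxw, hyz, hyw, hzw, rfl⟩ := Finset.card_eq_four.1 hQc
    have hm : ∀ a ∈ ({x, y, z, w} : Finset V), a ∈ X := fun a ha =>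
      (Finset.mem_filter.1 (hQ ha)).1
    have hc' : ∀ a ∈ ({x, y, z, w} : Finset V), ∀ b ∈ ({x, y, z, w} : Finset V), a ≠ b →
      c a b = red := fun a ha b hb hab => hTred a (hQ ha) b (hQ hb) hab
    have h1 : MFree c red 1 {y, z, w} := hr.step (b := x) (hm x (by simp))
      (fun a ha => hm a (by simp at ha ⊢; tauto)) (fun a ha => by
        have : a ≠ x := by
          rintro rfl
          simp at ha
          tauto
        exact ⟨this, hc' x (by simp) a (by simp at ha ⊢; tauto) this.symm⟩)
    exact hzw (h1.one (b := y) (by simp) (by simp) (by simp) hyz.symm hyw.symm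
      (hc' y (by simp) z (by simp) hyz) (hc' y (by simp) w (by simp) hyw))
  -- a maximal mate-free subset of `S`
  have hex : ∃ R ∈ S.powerset.filter (fun R => ∀ a ∈ R, ∀ b ∈ R, b ∉ mates c {red, blue} X a),
      ∀ R' ∈ S.powerset.filter (fun R => ∀ a ∈ R, ∀ b ∈ R, b ∉ mates c {red, blue} X a),
        R'.card ≤ R.card :=
    Finset.exists_max_image _ _ ⟨∅, by simp⟩
  obtain ⟨R, hR, hmax⟩ := hex
  simp only [Finset.mem_filter, Finset.mem_powerset] at hR hmax
  obtain ⟨hRS, hRf⟩ := hR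
  have hsymm : ∀ a ∈ X, ∀ b, b ∈ mates c {red, blue} X a → a ∈ mates c {red, blue} X b := by
    intro a ha b hb
    simp only [mates, Finset.mem_filter] at hb ⊢
    exact ⟨ha, hb.2.1.symm, by rw [hG.1]; exact hb.2.2⟩
  have hcov : S ⊆ R ∪ R.biUnion (fun a => mates c {red, blue} X a) := by
    intro x hx
    by_contra hxn
    simp only [Finset.mem_union, Finset.mem_biUnion, not_or, not_exists, not_and] at hxn
    have hxX : x ∈ X := (Finset.mem_filter.1 hx).1
    have := hmax (insert x R) ⟨Finset.insert_subset hx hRS, by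
      intro a ha b hb hab
      rw [Finset.mem_insert] at ha hb
      rcases ha with rfl | ha <;> rcases hb with rfl | hb
      · simp [mates] at hab
      · exact hxn.2 b hb (hsymm a hxX b hab)
      · exact hxn.2 a ha hab
      · exact hRf a ha b hb hab⟩
    rw [Finset.card_insert_of_notMem hxn.1] at this
    omega
  have hSR : S.card ≤ R.card + R.card := by
    refine (Finset.card_le_card hcov).trans ((Finset.card_union_le _ _).trans ?_)
    have : (R.biUnion (fun a => mates c {red, blue} X a)).card ≤ R.card * 1 :=
      Finset.card_biUnion_le_card_mul _ _ _ (fun a ha =>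
        hmate a (Finset.mem_filter.1 (hRS ha)).1)
    omega
  obtain ⟨T', hT'T, hT'⟩ := Finset.exists_subset_card_eq (min_le_left T.card 2)
  have hdisj : Disjoint R T' := by
    rw [Finset.disjoint_left]
    intro a ha ha'
    exact (Finset.mem_filter.1 (hRS ha)).2 (Finset.mem_filter.1 (hT'T ha')).2
  have hcard : 9 ≤ (R ∪ T').card := by
    rw [Finset.card_union_of_disjoint hdisj]
    omega
  have hYX : ∀ a ∈ R ∪ T', a ∈ X := by
    intro a ha
    rw [Finset.mem_union] at ha
    rcases ha with ha | ha
    · exact (Finset.mem_filter.1 (hRS ha)).1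
    · exact (Finset.mem_filter.1 (hT'T ha)).1
  have hYc : ∀ a ∈ R ∪ T', ∀ b ∈ R ∪ T', a ≠ b → c a b = red ∨ c a b = blue := by
    intro a ha b hb hab
    by_contra hn
    push Not at hn
    have hm : b ∈ mates c {red, blue} X a := by
      simp only [mates, Finset.mem_filter, Finset.mem_insert, Finset.mem_singleton, not_or]
      exact ⟨hYX b hb, hab.symm, hn⟩
    have hm' := hsymm a (hYX a ha) b hm
    rw [Finset.mem_union] at ha hb
    rcases ha with ha | ha
    · rcases hb with hb | hb
      · exact hRf a ha b hb hm
      · have := (Finset.mem_filter.1 (hT'T hb)).2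
        rw [Finset.card_eq_zero.1 this] at hm'
        simp at hm'
    · have := (Finset.mem_filter.1 (hT'T ha)).2
      rw [Finset.card_eq_zero.1 this] at hm
      simp at hm
  have hRm : ∀ a ∈ R, ∃ a', a' ∈ mates c {red, blue} X a := by
    intro a ha
    have := (Finset.mem_filter.1 (hRS ha)).2
    exact Finset.card_pos.1 (by omega)
  -- a red triangle with a vertex in `R` is impossible
  have tri : ∀ x ∈ R, ∀ y ∈ R ∪ T', ∀ z ∈ R ∪ T', x ≠ y → x ≠ z → y ≠ z →
      c x y = red → c x z = red → c y z = red → False := by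
    intro x hx y hy z hz hxy hxz hyz h1 h2 h3
    obtain ⟨x', hx'⟩ := hRm x hx
    have hxX := hYX x (Finset.mem_union_left _ hx)
    have hx'X : x' ∈ X := (Finset.mem_filter.1 hx').1
    have hx'x : x' ≠ x := (Finset.mem_filter.1 hx').2.1
    obtain ⟨hn1, e1⟩ := twin hG hP hxX hx' (hYX y hy) hxy.symm (Or.inl h1)
    obtain ⟨hn2, e2⟩ := twin hG hP hxX hx' (hYX z hz) hxz.symm (Or.inl h2)
    have k1 : MFree c red 1 {z, x, x'} := hr.step (b := y) (hYX y hy)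
      (by
        intro a ha
        simp only [Finset.mem_insert, Finset.mem_singleton] at ha
        rcases ha with rfl | rfl | rfl
        · exact hYX _ hz
        · exact hxX
        · exact hx'X)
      (by
        intro a ha
        simp only [Finset.mem_insert, Finset.mem_singleton] at ha
        rcases ha with rfl | rfl | rfl
        · exact ⟨hyz.symm, h3⟩
        · exact ⟨hxy, by rw [hG.1, h1]⟩
        · exact ⟨hn1, by rw [hG.1, e1, h1]⟩)
    exact hx'x.symm (k1.one (b := z) (by simp) (by simp) (by simp) hxz hn2
      (by rw [hG.1, h2]) (by rw [hG.1, e2, h2]))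
  have quad : ∀ x ∈ R, ∀ y ∈ R ∪ T', ∀ z ∈ R ∪ T', ∀ w ∈ R ∪ T',
      x ≠ y → x ≠ z → x ≠ w → y ≠ z → y ≠ w → z ≠ w →
      c x y = blue → c x z = blue → c x w = blue → c y z = blue → c y w = blue →
      c z w = blue → False := by
    intro x hx y hy z hz w hw hxy hxz hxw hyz hyw hzw h1 h2 h3 h4 h5 h6
    obtain ⟨x', hx'⟩ := hRm x hx
    have hxX := hYX x (Finset.mem_union_left _ hx)
    have hx'X : x' ∈ X := (Finset.mem_filter.1 hx').1
    have hx'x : x' ≠ x := (Finset.mem_filter.1 hx').2.1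
    obtain ⟨hn1, e1⟩ := twin hG hP hxX hx' (hYX y hy) hxy.symm (Or.inr h1)
    obtain ⟨hn2, e2⟩ := twin hG hP hxX hx' (hYX z hz) hxz.symm (Or.inr h2)
    obtain ⟨hn3, e3⟩ := twin hG hP hxX hx' (hYX w hw) hxw.symm (Or.inr h3)
    have k2 : MFree c blue 2 {w, z, x, x'} := hb.step (b := y) (hYX y hy)
      (by
        intro a ha
        simp only [Finset.mem_insert, Finset.mem_singleton] at ha
        rcases ha with rfl | rfl | rfl | rfl
        · exact hYX _ hw
        · exact hYX _ hz
        · exact hxX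
        · exact hx'X)
      (by
        intro a ha
        simp only [Finset.mem_insert, Finset.mem_singleton] at ha
        rcases ha with rfl | rfl | rfl | rfl
        · exact ⟨hyw.symm, h5⟩
        · exact ⟨hyz.symm, h4⟩
        · exact ⟨hxy, by rw [hG.1, h1]⟩
        · exact ⟨hn1, by rw [hG.1, e1, h1]⟩)
    have k1 : MFree c blue 1 {z, x, x'} := k2.step (b := w) (by simp)
      (by
        intro a ha
        simp only [Finset.mem_insert, Finset.mem_singleton] at ha ⊢
        tauto)
      (by
        intro a ha
        simp only [Finset.mem_insert, Finset.mem_singleton] at ha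
        rcases ha with rfl | rfl | rfl
        · exact ⟨hzw, by rw [hG.1, h6]⟩
        · exact ⟨hxw, by rw [hG.1, h3]⟩
        · exact ⟨hn3, by rw [hG.1, e3, h3]⟩)
    exact hx'x.symm (k1.one (b := z) (by simp) (by simp) (by simp) hxz hn2
      (by rw [hG.1, h2]) (by rw [hG.1, e2, h2]))
  have hT2 : T'.card ≤ 2 := by omega
  have sel : ∀ x ∈ R ∪ T', ∀ y ∈ R ∪ T', ∀ z ∈ R ∪ T', x ≠ y → x ≠ z → y ≠ z →
      x ∈ R ∨ y ∈ R ∨ z ∈ R := by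
    intro x hx y hy z hz hxy hxz hyz
    by_contra hn
    push Not at hn
    have hsub : ({x, y, z} : Finset V) ⊆ T' := by
      intro a ha
      simp only [Finset.mem_insert, Finset.mem_singleton] at ha
      simp only [Finset.mem_union] at hx hy hz
      rcases ha with rfl | rfl | rfl <;> tauto
    have h3 := Finset.card_le_card hsub
    rw [Finset.card_eq_three.2 ⟨x, y, z, hxy, hxz, hyz, rfl⟩] at h3
    omega
  rcases r34 (Y := R ∪ T') (fun x y => c x y = red) (fun x y h => by rw [hG.1, h]) hcard with
    ⟨x, hx, y, hy, z, hz, hxy, hxz, hyz, h1, h2, h3⟩ |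
    ⟨x, hx, y, hy, z, hz, w, hw, hxy, hxz, hxw, hyz, hyw, hzw, h1, h2, h3, h4, h5, h6⟩
  · rcases sel x hx y hy z hz hxy hxz hyz with h | h | h
    · exact tri x h y hy z hz hxy hxz hyz h1 h2 h3
    · exact tri y h x hx z hz hxy.symm hyz hxz (by rw [hG.1, h1]) h3 h2
    · exact tri z h x hx y hy hxz.symm hyz.symm hxy (by rw [hG.1, h2]) (by rw [hG.1, h3]) h1
  · have bl : ∀ a ∈ R ∪ T', ∀ b ∈ R ∪ T', a ≠ b → ¬ c a b = red → c a b = blue ∧ c b a = blue := by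
      intro a ha b hb hab hn
      have := (hYc a ha b hb hab).resolve_left hn
      exact ⟨this, by rw [hG.1, this]⟩
    have e1 := bl x hx y hy hxy h1
    have e2 := bl x hx z hz hxz h2
    have e3 := bl x hx w hw hxw h3
    have e4 := bl y hy z hz hyz h4
    have e5 := bl y hy w hw hyw h5
    have e6 := bl z hz w hw hzw h6
    rcases sel x hx y hy z hz hxy hxz hyz with h | h | h
    · exact quad x h y hy z hz w hw hxy hxz hxw hyz hyw hzw e1.1 e2.1 e3.1 e4.1 e5.1 e6.1
    · exact quad y h x hx z hz w hw hxy.symm hyz hyw hxz hxw hzw e1.2 e4.1 e5.1 e2.1 e3.1 e6.1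
    · exact quad z h x hx y hy w hw hxz.symm hyz.symm hzw hxy hxw hyw e2.2 e4.2 e6.1 e1.1 e3.1 e5.1

lemma sm33 (hrb : red ≠ blue) (hG : GalOn c X)
    (hP : ∀ i, i ≠ red → i ≠ blue → MFree c i 1 X)
    (hr : MFree c red 3 X) (hb : MFree c blue 3 X) : X.card ≤ 34 := by
  rcases X.eq_empty_or_nonempty with rfl | ⟨v, hv⟩
  · simp
  have h1 : (nbh c red X v).card ≤ 16 :=
    sm32 hrb (hG.mono (nbh_subset v))
      (fun i h1 h2 => (hP i h1 h2).mono (nbh_subset v)) (hr v hv) (hb.mono (nbh_subset v))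
  have h2 : (nbh c blue X v).card ≤ 16 :=
    sm32 hrb.symm (hG.mono (nbh_subset v))
      (fun i h1 h2 => (hP i h2 h1).mono (nbh_subset v)) (hb v hv) (hr.mono (nbh_subset v))
  have h3 := deg2 (c := c) (red := red) (blue := blue) (X := X) (v := v)
  have h4 := mates2_le hG hP hv
  omega


/-- Reachability in colour `i` inside `X`. -/
def Rch (c : V → V → κ) (i : κ) (X : Finset V) : V → V → Prop :=
  Relation.ReflTransGen (fun a b => a ∈ X ∧ b ∈ X ∧ a ≠ b ∧ c a b = i)

lemma Rch.symm' (hs : ∀ u v, c u v = c v u) {x y : V} (h : Rch c i X x y) : Rch c i X y x := by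
  induction h with
  | refl => exact Relation.ReflTransGen.refl
  | tail _ hbd ih =>
    exact Relation.ReflTransGen.head ⟨hbd.2.1, hbd.1, hbd.2.2.1.symm, by rw [hs]; exact hbd.2.2.2⟩ ih

lemma Rch.memX {x y : V} (h : Rch c i X x y) (hx : x ∈ X) : y ∈ X := by
  induction h with
  | refl => exact hx
  | tail _ hbd _ => exact hbd.2.1

lemma Rch.homog (hG : GalOn c X) {x x' z : V} (h : Rch c i X x x') (hx : x ∈ X) (hz : z ∈ X)
    (hn : ¬ Rch c i X x z) : c x z = c x' z := by
  induction h with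
  | refl => rfl
  | @tail b d hb hbd ih =>
    rw [ih]
    obtain ⟨hbX, hdX, hne, hc⟩ := hbd
    have hbz : b ≠ z := by rintro rfl; exact hn hb
    have hd : Rch c i X x d := hb.tail ⟨hbX, hdX, hne, hc⟩
    have hdz : d ≠ z := by rintro rfl; exact hn hd
    have h1 : c b z ≠ i := fun h => hn (hb.tail ⟨hbX, hz, hbz, h⟩)
    have h2 : c d z ≠ i := fun h => hn (hd.tail ⟨hdX, hz, hdz, h⟩)
    rcases hG.2 b hbX d hdX z hz hne hbz hdz with h | h | h
    · exact absurd (h.symm.trans hc) h1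
    · exact absurd (h.symm.trans hc) h2
    · exact h

def Used (c : V → V → κ) (X : Finset V) (i : κ) : Prop :=
  ∃ a ∈ X, ∃ b ∈ X, a ≠ b ∧ c a b = i

lemma discon : ∀ (N : ℕ) (X : Finset V), X.card = N → GalOn c X →
    (∃ i j l : κ, i ≠ j ∧ i ≠ l ∧ j ≠ l ∧ Used c X i ∧ Used c X j ∧ Used c X l) →
    ∃ i, Used c X i ∧ ∃ x ∈ X, ∃ y ∈ X, ¬ Rch c i X x y := by
  intro N
  induction N with
  | zero =>
    rintro X hX _ ⟨i, j, l, _, _, _, ⟨a, ha, _⟩, _⟩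
    simp [Finset.card_eq_zero.1 hX] at ha
  | succ N ih =>
    rintro X hX hG ⟨i, j, l, hij, hil, hjl, hi, hj, hl⟩
    by_contra hcon
    push Not at hcon
    have hedge : ∀ i, Used c X i → ∀ v ∈ X, ∃ w ∈ X, w ≠ v ∧ c v w = i := by
      intro i hi v hv
      obtain ⟨a, ha, b, hb, hab, _⟩ := id hi
      obtain ⟨w, hw, hwv⟩ : ∃ w ∈ X, w ≠ v := by
        by_cases h : a = v
        · exact ⟨b, hb, by rintro rfl; exact hab h⟩
        · exact ⟨a, ha, h⟩
      rcases Relation.ReflTransGen.cases_head (hcon i hi v hv w hw) with h | ⟨u, hu, _⟩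
      · exact absurd h.symm hwv
      · exact ⟨u, hu.2.1, hu.2.2.1.symm, hu.2.2.2⟩
    obtain ⟨v, hv, -⟩ := id hi
    have hused : ∀ i, Used c X i → (∃ j, j ≠ i ∧ Used c X j) → Used c (X.erase v) i := by
      rintro i hi ⟨j, hji, hj⟩
      obtain ⟨x, hx, hxv, hc⟩ := hedge j hj v hv
      obtain ⟨y, hy, hyx, hc'⟩ := hedge i hi x hx
      have hyv : y ≠ v := by
        rintro rfl
        rw [hG.1] at hc'
        exact hji (hc.symm.trans hc')
      exact ⟨x, Finset.mem_erase.2 ⟨hxv, hx⟩, y, Finset.mem_erase.2 ⟨hyv, hy⟩, hyx.symm, hc'⟩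
    have hsub : X.erase v ⊆ X := Finset.erase_subset _ _
    have hG' := hG.mono hsub
    obtain ⟨m, hm, x0, hx0, y0, hy0, hxy0⟩ := ih (X.erase v)
      (by rw [Finset.card_erase_of_mem hv, hX]; rfl) hG'
      ⟨i, j, l, hij, hil, hjl, hused i hi ⟨j, hij.symm, hj⟩, hused j hj ⟨i, hij, hi⟩,
        hused l hl ⟨i, hil, hi⟩⟩
    have hmX : Used c X m := by
      obtain ⟨a, ha, b, hb, h⟩ := hm
      exact ⟨a, hsub ha, b, hsub hb, h⟩
    have claim : ∀ j, j ≠ m → ∀ x ∈ X.erase v, c v x = j → ∀ y ∈ X.erase v,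
        ¬ Rch c m (X.erase v) x y → c x y = j := by
      intro j hjm x hx hcx y hy hn
      have key : ∀ a, Rch c m X y a → (a ≠ v ∧ Rch c m (X.erase v) y a) ∨
          ∃ y', Rch c m (X.erase v) y y' ∧ c v y' = m := by
        intro a ha
        induction ha with
        | refl => exact Or.inl ⟨(Finset.mem_erase.1 hy).1, Relation.ReflTransGen.refl⟩
        | @tail b d hb hbd ih =>
          rcases ih with ⟨hbv, hr⟩ | h
          · by_cases hd : d = v
            · right
              refine ⟨b, hr, ?_⟩
              rw [← hd, hG.1]
              exact hbd.2.2.2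
            · left
              exact ⟨hd, hr.tail ⟨Finset.mem_erase.2 ⟨hbv, hbd.1⟩,
                Finset.mem_erase.2 ⟨hd, hbd.2.1⟩, hbd.2.2⟩⟩
          · exact Or.inr h
      rcases key v (hcon m hmX y (hsub hy) v hv) with h | ⟨y', hr, hcy⟩
      · exact absurd rfl h.1
      have hy' := hr.memX hy
      have hn' : ¬ Rch c m (X.erase v) x y' := fun h => hn (h.trans (hr.symm' hG.1))
      have hxy' : x ≠ y' := by
        rintro rfl
        exact hn' Relation.ReflTransGen.refl
      have hne : c x y' ≠ m := fun h => hn' (Relation.ReflTransGen.single ⟨hx, hy', hxy', h⟩)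
      have hxy'j : c x y' = j := by
        rcases hG.2 v hv x (hsub hx) y' (hsub hy') (Finset.mem_erase.1 hx).1.symm
          (Finset.mem_erase.1 hy').1.symm hxy' with h | h | h
        · exact absurd (hcx.symm.trans (h.trans hcy)) hjm
        · exact h.symm.trans hcx
        · exact absurd (h.symm.trans hcy) hne
      rw [← hxy'j, hG.1 x y, hG.1 x y']
      exact hr.homog hG' hy hx (fun h => hn (h.symm' hG.1))
    obtain ⟨j', l', hj'm, hl'm, hjl', hj', hl'⟩ : ∃ j' l', j' ≠ m ∧ l' ≠ m ∧ j' ≠ l' ∧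
        Used c X j' ∧ Used c X l' := by
      by_cases h1 : i = m
      · exact ⟨j, l, by rw [← h1]; exact hij.symm, by rw [← h1]; exact hil.symm, hjl, hj, hl⟩
      by_cases h2 : j = m
      · exact ⟨i, l, h1, by rw [← h2]; exact hjl.symm, hil, hi, hl⟩
      exact ⟨i, j, h1, h2, hij, hi, hj⟩
    obtain ⟨x, hx, hxv, hcx⟩ := hedge j' hj' v hv
    obtain ⟨x', hx', hxv', hcx'⟩ := hedge l' hl' v hv
    have hxe : x ∈ X.erase v := Finset.mem_erase.2 ⟨hxv, hx⟩
    have hxe' : x' ∈ X.erase v := Finset.mem_erase.2 ⟨hxv', hx'⟩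
    have c1 := claim j' hj'm x hxe hcx
    have c2 := claim l' hl'm x' hxe' hcx'
    by_cases hr : Rch c m (X.erase v) x x'
    · obtain ⟨w, hw, hn⟩ : ∃ w ∈ X.erase v, ¬ Rch c m (X.erase v) x w := by
        by_contra hall
        push Not at hall
        exact hxy0 (((hall x0 hx0).symm' hG.1).trans (hall y0 hy0))
      have hn' : ¬ Rch c m (X.erase v) x' w := fun h => hn (hr.trans h)
      have e := hr.homog hG' hxe hw hn
      rw [c1 w hw hn, c2 w hw hn'] at e
      exact hjl' e
    · have e1 := c1 x' hxe' hr
      have e2 := c2 x hxe (fun h => hr (h.symm' hG.1))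
      rw [hG.1] at e2
      exact hjl' (e1.symm.trans e2)

def SplitA (c : V → V → κ) (X : Finset V) : Prop :=
  ∃ i A B, A.Nonempty ∧ B.Nonempty ∧ Disjoint A B ∧ A ∪ B = X ∧ ∀ a ∈ A, ∀ b ∈ B, c a b = i

def SplitB (c : V → V → κ) (X : Finset V) (red blue : κ) (p : V → V) : Prop :=
  (∀ x ∈ X, ∀ y ∈ X, p x ≠ p y → c x y = red ∨ c x y = blue) ∧
  (∀ x ∈ X, ∀ x' ∈ X, ∀ y ∈ X, p x = p x' → p x ≠ p y → c x y = c x' y) ∧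
  (∀ x ∈ X, ∃ y ∈ X, p x ≠ p y ∧ c x y = red) ∧
  (∀ x ∈ X, ∃ y ∈ X, p x ≠ p y ∧ c x y = blue)

theorem decomp : ∀ (N : ℕ) (X : Finset V), X.card = N → GalOn c X → 2 ≤ X.card →
    SplitA c X ∨ ∃ red blue p, red ≠ blue ∧ SplitB c X red blue p := by
  intro N
  induction N using Nat.strong_induction_on with
  | _ N ih =>
  intro X hX hG h2
  by_cases h3 : ∃ i j l : κ, i ≠ j ∧ i ≠ l ∧ j ≠ l ∧ Used c X i ∧ Used c X j ∧ Used c X l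
  · obtain ⟨i, ⟨a, ha, b, hb, hab, hcab⟩, x0, hx0, y0, hy0, hn0⟩ := discon X.card X rfl hG h3
    let st : Setoid V := ⟨Rch c i X, ⟨fun _ => Relation.ReflTransGen.refl,
      fun h => h.symm' hG.1, fun h h' => h.trans h'⟩⟩
    let rep : V → V := fun x => (Quotient.mk st x).out
    have hrep : ∀ x, Rch c i X (rep x) x := fun x => Quotient.mk_out (s := st) x
    have hrepeq : ∀ x y, Rch c i X x y → rep x = rep y := fun x y h => by
      have : Quotient.mk st x = Quotient.mk st y := Quotient.sound h
      simp only [rep, this]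
    have hrepne : ∀ x y, rep x ≠ rep y → ¬ Rch c i X x y := fun x y h h' => h (hrepeq x y h')
    have hrepX : ∀ x ∈ X, rep x ∈ X := fun x hx => ((hrep x).symm' hG.1).memX hx
    have hidem : ∀ x, rep (rep x) = rep x := fun x => hrepeq _ _ (hrep x)
    have hc : ∀ x ∈ X, ∀ y ∈ X, rep x ≠ rep y → c x y = c (rep x) (rep y) := by
      intro x hx y hy hne
      have e1 := ((hrep x).symm' hG.1).homog hG hx hy (hrepne x y hne)
      have e2 := ((hrep y).symm' hG.1).homog hG hy (hrepX x hx)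
        (hrepne y (rep x) (by rw [hidem]; exact hne.symm))
      rw [e1, hG.1, e2, hG.1]
    have hYX : X.image rep ⊆ X := by
      intro y hy
      obtain ⟨x, hx, rfl⟩ := Finset.mem_image.1 hy
      exact hrepX x hx
    have hlt : (X.image rep).card < X.card := by
      refine lt_of_le_of_ne Finset.card_image_le (fun h => ?_)
      have hinj := Finset.card_image_iff.1 h
      exact hab (hinj ha hb (hrepeq a b (Relation.ReflTransGen.single ⟨ha, hb, hab, hcab⟩)))
    have hge : 2 ≤ (X.image rep).card := by
      refine Finset.one_lt_card.2 ⟨rep x0, Finset.mem_image_of_mem _ hx0, rep y0,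
        Finset.mem_image_of_mem _ hy0, fun h => hn0 ?_⟩
      exact ((hrep x0).symm' hG.1).trans (by rw [h]; exact hrep y0)
    rcases ih _ (hX ▸ hlt) (X.image rep) rfl (hG.mono hYX) hge with
      ⟨e, A, B, hA, hB, hAB, hABX, hj⟩ | ⟨red, blue, p, hrb, h1, h2, h3, h4⟩
    · left
      refine ⟨e, X.filter (fun x => rep x ∈ A), X.filter (fun x => rep x ∈ B), ?_, ?_, ?_, ?_, ?_⟩
      · obtain ⟨a, ha⟩ := hA
        have : a ∈ X.image rep := by rw [← hABX]; exact Finset.mem_union_left _ ha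
        obtain ⟨x, hx, rfl⟩ := Finset.mem_image.1 this
        exact ⟨x, Finset.mem_filter.2 ⟨hx, ha⟩⟩
      · obtain ⟨a, ha⟩ := hB
        have : a ∈ X.image rep := by rw [← hABX]; exact Finset.mem_union_right _ ha
        obtain ⟨x, hx, rfl⟩ := Finset.mem_image.1 this
        exact ⟨x, Finset.mem_filter.2 ⟨hx, ha⟩⟩
      · rw [Finset.disjoint_left]
        intro a ha hb
        exact Finset.disjoint_left.1 hAB (Finset.mem_filter.1 ha).2 (Finset.mem_filter.1 hb).2
      · ext x
        have : x ∈ X → rep x ∈ A ∨ rep x ∈ B := fun hx => by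
          rw [← Finset.mem_union, hABX]
          exact Finset.mem_image_of_mem _ hx
        simp only [Finset.mem_union, Finset.mem_filter]
        tauto
      · intro a ha b hb
        rw [Finset.mem_filter] at ha hb
        rw [hc a ha.1 b hb.1 (fun h => Finset.disjoint_left.1 hAB ha.2 (h ▸ hb.2))]
        exact hj _ ha.2 _ hb.2
    · right
      have him : ∀ x ∈ X, rep x ∈ X.image rep := fun x hx => Finset.mem_image_of_mem _ hx
      refine ⟨red, blue, fun x => p (rep x), hrb, ?_, ?_, ?_, ?_⟩
      · intro x hx y hy hne
        rw [hc x hx y hy (fun h => hne (by simp only [h]))]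
        exact h1 _ (him x hx) _ (him y hy) hne
      · intro x hx x' hx' y hy he hne
        rw [hc x hx y hy (fun h => hne (by simp only [h])),
          hc x' hx' y hy (fun h => hne (by simp only [← h]; exact he))]
        exact h2 _ (him x hx) _ (him x' hx') _ (him y hy) he hne
      · intro x hx
        obtain ⟨y, hy, hne, hcy⟩ := h3 _ (him x hx)
        obtain ⟨z, hz, rfl⟩ := Finset.mem_image.1 hy
        refine ⟨z, hz, hne, ?_⟩
        rw [hc x hx z hz (fun h => hne (by simp only [h]))]
        exact hcy
      · intro x hx
        obtain ⟨y, hy, hne, hcy⟩ := h4 _ (him x hx)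
        obtain ⟨z, hz, rfl⟩ := Finset.mem_image.1 hy
        refine ⟨z, hz, hne, ?_⟩
        rw [hc x hx z hz (fun h => hne (by simp only [h]))]
        exact hcy
  · by_cases hA : SplitA c X
    · exact Or.inl hA
    right
    -- every vertex sees, for each colour, an edge not in that colour
    have hne : ∀ x ∈ X, ∀ i, ∃ y ∈ X, y ≠ x ∧ c x y ≠ i := by
      intro x hx i
      by_contra hcon
      push Not at hcon
      refine hA ⟨i, {x}, X.erase x, ⟨x, by simp⟩, ?_, by simp, ?_, ?_⟩
      · exact Finset.card_pos.1 (by rw [Finset.card_erase_of_mem hx]; omega)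
      · ext y
        simp only [Finset.mem_union, Finset.mem_singleton, Finset.mem_erase]
        constructor
        · rintro (rfl | h)
          · exact hx
          · exact h.2
        · tauto
      · intro a ha b hb
        rw [Finset.mem_singleton] at ha
        subst ha
        rw [Finset.mem_erase] at hb
        exact hcon b hb.2 hb.1
    obtain ⟨x, hx⟩ := Finset.card_pos.1 (by omega : 0 < X.card)
    obtain ⟨y, hy, hyx⟩ : ∃ y ∈ X, y ≠ x := by
      obtain ⟨y, hy⟩ := Finset.card_pos.1 (by rw [Finset.card_erase_of_mem hx]; omega :
        0 < (X.erase x).card)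
      exact ⟨y, (Finset.mem_erase.1 hy).2, (Finset.mem_erase.1 hy).1⟩
    obtain ⟨z, hz, hzx, hcz⟩ := hne x hx (c x y)
    have two : ∀ a ∈ X, ∀ b ∈ X, a ≠ b → c a b = c x y ∨ c a b = c x z := by
      intro a ha b hb hab
      by_contra hn
      push Not at hn
      exact h3 ⟨c x y, c x z, c a b, hcz.symm, hn.1.symm, hn.2.symm,
        ⟨x, hx, y, hy, hyx.symm, rfl⟩, ⟨x, hx, z, hz, hzx.symm, rfl⟩, ⟨a, ha, b, hb, hab, rfl⟩⟩
    refine ⟨c x y, c x z, id, hcz.symm, fun a ha b hb hab => two a ha b hb hab, ?_, ?_, ?_⟩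
    · intro a _ a' _ b _ he _
      simp only [id] at he
      rw [he]
    · intro a ha
      obtain ⟨b, hb, hba, hcb⟩ := hne a ha (c x z)
      exact ⟨b, hb, hba.symm, (two a ha b hb hba.symm).resolve_right hcb⟩
    · intro a ha
      obtain ⟨b, hb, hba, hcb⟩ := hne a ha (c x y)
      exact ⟨b, hb, hba.symm, (two a ha b hb hba.symm).resolve_left hcb⟩


def ee : ℕ → ℕ
  | 0 => 2
  | 1 => 4
  | s + 2 => 5 * ee s

def oo : ℕ → ℕ
  | 0 => 6
  | 1 => 16
  | 2 => 32
  | s + 3 => 5 * oo (s + 1)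

/-- The extremal function. -/
def FF (s : ℕ) : ℕ → ℕ
  | 0 => ee s
  | 1 => oo s
  | r + 2 => 17 * FF s r

lemma ee_oo (s : ℕ) :
    2 ≤ ee s ∧ 2 ≤ oo s ∧ 2 * ee s ≤ ee (s + 1) ∧ 2 * oo s ≤ oo (s + 1) ∧
    2 * ee (s + 1) ≤ 5 * ee s ∧ 3 * oo (s + 1) ≤ 8 * oo s ∧
    ee (s + 2) = 5 * ee s ∧ 5 * oo s ≤ oo (s + 2) ∧ 3 * oo (s + 2) ≤ 16 * oo s ∧
    ee s + ee (s + 1) ≤ oo s ∧ oo s + oo (s + 1) ≤ 17 * ee s ∧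
    oo (s + 1) = 8 * ee s ∧ 8 * oo s ≤ 17 * ee (s + 1) ∧
    2 * oo (s + 1) + 3 * oo s ≤ 17 * ee (s + 1) ∧ oo s ≤ 4 * ee s ∧ 3 * ee s ≤ oo s := by
  induction s using Nat.strong_induction_on with
  | _ s ih =>
    match s with
    | 0 => simp [ee, oo]
    | 1 => simp [ee, oo]
    | 2 => simp [ee, oo]
    | s + 3 =>
      have := ih (s + 1) (by omega)
      have e1 : ee (s + 3) = 5 * ee (s + 1) := rfl
      have e2 : ee (s + 4) = 5 * ee (s + 2) := rfl
      have e3 : ee (s + 5) = 5 * ee (s + 3) := rfl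
      have o1 : oo (s + 3) = 5 * oo (s + 1) := rfl
      have o2 : oo (s + 4) = 5 * oo (s + 2) := rfl
      have o3 : oo (s + 5) = 5 * oo (s + 3) := rfl
      simp only [Nat.add_assoc, Nat.reduceAdd] at this ⊢
      refine ⟨?_, ?_, ?_, ?_, ?_, ?_, ?_, ?_, ?_, ?_, ?_, ?_, ?_, ?_, ?_, ?_⟩ <;> omega

lemma FF_facts (s : ℕ) : ∀ r : ℕ,
    2 ≤ FF s r ∧ 2 * FF s r ≤ FF (s + 1) r ∧ FF s r + FF (s + 1) r ≤ FF s (r + 1) ∧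
    5 * FF s r ≤ FF (s + 2) r ∧ 8 * FF s r ≤ FF (s + 1) (r + 1) ∧
    2 * FF (s + 1) r + 3 * FF s r ≤ FF (s + 1) (r + 1) ∧
    FF (s + 2) r + (FF s r + FF (s + 1) r) + FF s (r + 1) ≤ 17 * FF s r ∧
    FF (s + 1) r + (FF s r + FF (s + 1) r) + 2 * FF (s + 2) r ≤ 17 * FF s r ∧
    FF (s + 1) r + (FF s r + FF (s + 1) r) + (3 * FF s r + 2 * FF (s + 1) r) ≤ 17 * FF s r ∧
    FF (s + 1) r + (FF s r + FF (s + 1) r) + (2 * FF s r + FF (s + 1) r + FF (s + 2) r)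
      ≤ 17 * FF s r
  | 0 => by
    have := ee_oo s
    simp only [FF, Nat.zero_add]
    omega
  | 1 => by
    have := ee_oo s
    simp only [FF, Nat.reduceAdd]
    omega
  | r + 2 => by
    have := FF_facts s r
    have e : r + 2 + 1 = (r + 1) + 2 := by omega
    simp only [e, FF]
    omega

/-! ### Joins -/

def Join (c : V → V → κ) (i : κ) (A B : Finset V) : Prop :=
  ∀ a ∈ A, ∀ b ∈ B, a ≠ b ∧ c a b = i ∧ c b a = i

lemma Join.symm (h : Join c i A B) : Join c i B A :=
  fun b hb a ha => ⟨(h a ha b hb).1.symm, (h a ha b hb).2.2, (h a ha b hb).2.1⟩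

lemma Join.free1 (h : Join c i A B) (hA : A ⊆ X) (hB : B ⊆ X) (hX : MFree c i (n + 1) X)
    (hne : B.Nonempty) : MFree c i n A := by
  obtain ⟨b, hb⟩ := hne
  exact hX.step (hB hb) hA (fun a ha => ⟨(h a ha b hb).1, (h a ha b hb).2.2⟩)

lemma Join.free2 (h : Join c i A B) (hA : A ⊆ X) (hB : B ⊆ X) (hX : MFree c i (n + 2) X)
    (hne : ¬ NoEdge c i B) : MFree c i n A := by
  unfold NoEdge at hne
  push Not at hne
  obtain ⟨x, hx, y, hy, hxy, hc⟩ := hne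
  have h1 : MFree c i (n + 1) (insert y A) := hX.step (hB hx)
    (Finset.insert_subset (hB hy) hA) (fun a ha => by
      rcases Finset.mem_insert.1 ha with rfl | ha
      · exact ⟨hxy.symm, hc⟩
      · exact ⟨(h a ha x hx).1, (h a ha x hx).2.2⟩)
  exact h1.step (Finset.mem_insert_self _ _) (Finset.subset_insert _ _)
    (fun a ha => ⟨(h a ha y hy).1, (h a ha y hy).2.2⟩)

lemma joinH (h : Join c i A B) (hA : A ⊆ X) (hB : B ⊆ X) (hX : MFree c i 3 X)
    (hA' : A.Nonempty) (hB' : B.Nonempty) :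
    (MFree c i 2 A ∧ MFree c i 1 B) ∨ (MFree c i 1 A ∧ MFree c i 2 B) := by
  by_cases h1 : MFree c i 1 A
  · exact Or.inr ⟨h1, h.symm.free1 hB hA hX hA'⟩
  · refine Or.inl ⟨h.free1 hA hB hX hB', NoEdge.free ?_⟩
    by_contra h2
    exact h1 (h.free2 hA hB hX h2)

/-! ### Parts -/

def pt (p : V → V) (X : Finset V) (x : V) : Finset V := X.filter (fun y => p y = p x)

def nc (c : V → V → κ) (i : κ) (p : V → V) (X : Finset V) (x : V) : Finset V :=
  X.filter (fun y => p y ≠ p x ∧ c x y = i)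

variable {p : V → V}

lemma pt_sub (x : V) : pt p X x ⊆ X := Finset.filter_subset _ _

lemma nc_sub (x : V) : nc c i p X x ⊆ X := Finset.filter_subset _ _

lemma mem_pt {x y : V} : y ∈ pt p X x ↔ y ∈ X ∧ p y = p x := by simp [pt]

lemma mem_nc {x y : V} : y ∈ nc c i p X x ↔ y ∈ X ∧ p y ≠ p x ∧ c x y = i := by simp [nc]

lemma lem_split (hs : ∀ u v, c u v = c v u) (hm : ∀ x ∈ Y, ∀ y ∈ Y, p x ≠ p y → c x y = i)
    (x : V) : Join c i (Y.filter (fun y => p y = p x)) (Y.filter (fun y => ¬ p y = p x)) := by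
  intro a ha b hb
  rw [Finset.mem_filter] at ha hb
  have hne : p a ≠ p b := fun h => hb.2 (h.symm.trans ha.2)
  have := hm a ha.1 b hb.1 hne
  exact ⟨fun h => hne (by rw [h]), this, by rw [hs, this]⟩

lemma lemM {w w1 : ℕ} (hs : ∀ u v, c u v = c v u) (hYX : Y ⊆ X)
    (hm : ∀ x ∈ Y, ∀ y ∈ Y, p x ≠ p y → c x y = i)
    (hpt : ∀ x ∈ Y, MFree c i 2 (pt p X x)) (hY : MFree c i 3 Y)
    (hw : ∀ Z ⊆ Y, MFree c i 1 Z → Z.card ≤ w) (hw1 : ∀ Z ⊆ Y, MFree c i 2 Z → Z.card ≤ w1) :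
    Y.card ≤ w + w1 := by
  rcases Y.eq_empty_or_nonempty with rfl | ⟨x, hx⟩
  · simp
  have hj := lem_split hs hm x
  have hc := Finset.card_filter_add_card_filter_not (s := Y) (fun y => p y = p x)
  have hsub1 := Finset.filter_subset (fun y => p y = p x) Y
  have hsub2 := Finset.filter_subset (fun y => ¬ p y = p x) Y
  have hA : MFree c i 2 (Y.filter (fun y => p y = p x)) := (hpt x hx).mono (fun y hy => by
    rw [Finset.mem_filter] at hy
    exact mem_pt.2 ⟨hYX hy.1, hy.2⟩)
  rcases (Y.filter (fun y => ¬ p y = p x)).eq_empty_or_nonempty with h0 | hne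
  · rw [h0, Finset.card_empty] at hc
    have := hw1 _ hsub1 hA
    omega
  rcases joinH hj hsub1 hsub2 hY ⟨x, by simp [hx]⟩ hne with ⟨h1, h2⟩ | ⟨h1, h2⟩
  · have := hw1 _ hsub1 h1
    have := hw _ hsub2 h2
    omega
  · have := hw _ hsub1 h1
    have := hw1 _ hsub2 h2
    omega

lemma lemM' {w : ℕ} (hs : ∀ u v, c u v = c v u) (hYX : Y ⊆ X)
    (hm : ∀ x ∈ Y, ∀ y ∈ Y, p x ≠ p y → c x y = i)
    (hpt : ∀ x ∈ Y, MFree c i 1 (pt p X x)) (hY : MFree c i 2 Y)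
    (hw : ∀ Z ⊆ Y, MFree c i 1 Z → Z.card ≤ w) : Y.card ≤ 2 * w := by
  rcases Y.eq_empty_or_nonempty with rfl | ⟨x, hx⟩
  · simp
  have hj := lem_split hs hm x
  have hc := Finset.card_filter_add_card_filter_not (s := Y) (fun y => p y = p x)
  have hsub1 := Finset.filter_subset (fun y => p y = p x) Y
  have hsub2 := Finset.filter_subset (fun y => ¬ p y = p x) Y
  have hA : MFree c i 1 (Y.filter (fun y => p y = p x)) := (hpt x hx).mono (fun y hy => by
    rw [Finset.mem_filter] at hy
    exact mem_pt.2 ⟨hYX hy.1, hy.2⟩)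
  have h1 := hw _ hsub1 hA
  have h2 := hw _ hsub2 (hj.symm.free1 hsub2 hsub1 hY ⟨x, by simp [hx]⟩)
  omega

lemma light {W m : ℕ} (hW : 2 ≤ W) (hpt : ∀ x ∈ X, (pt p X x).card ≤ W)
    (hT : ∀ T ⊆ X, (∀ x ∈ X, (T.filter (fun y => p y = p x)).card ≤ 2) → T.card ≤ 2 * m) :
    X.card ≤ W * m := by
  classical
  have hch : ∀ q : V, ∃ S ⊆ X.filter (fun y => p y = q),
      S.card = min (X.filter (fun y => p y = q)).card 2 := fun q =>
    Finset.exists_subset_card_eq (min_le_left _ _)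
  choose S hS hSc using hch
  set T := (X.image p).biUnion S with hTdef
  have hSp : ∀ q, ∀ y ∈ S q, y ∈ X ∧ p y = q := fun q y hy => Finset.mem_filter.1 (hS q hy)
  have hTX : T ⊆ X := by
    intro y hy
    obtain ⟨q, _, hq⟩ := Finset.mem_biUnion.1 hy
    exact (hSp q y hq).1
  have hTc : T.card ≤ 2 * m := by
    refine hT T hTX (fun x hx => ?_)
    have : T.filter (fun y => p y = p x) ⊆ S (p x) := by
      intro y hy
      rw [Finset.mem_filter] at hy
      obtain ⟨q, _, hq⟩ := Finset.mem_biUnion.1 hy.1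
      have := (hSp q y hq).2
      rw [← hy.2, this]
      exact hq
    have h1 := Finset.card_le_card this
    have h2 := hSc (p x)
    omega
  have hTs : T.card = ∑ q ∈ X.image p, (S q).card := by
    refine Finset.card_biUnion (fun q _ q' _ hqq => ?_)
    change Disjoint (S q) (S q')
    rw [Finset.disjoint_left]
    intro y hy hy'
    exact hqq ((hSp q y hy).2.symm.trans (hSp q' y hy').2)
  have hXs : X.card = ∑ q ∈ X.image p, (X.filter (fun y => p y = q)).card :=
    Finset.card_eq_sum_card_image p X
  have hle : 2 * X.card ≤ W * T.card := by
    rw [hTs, hXs, Finset.mul_sum, Finset.mul_sum]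
    refine Finset.sum_le_sum (fun q hq => ?_)
    obtain ⟨x, hx, rfl⟩ := Finset.mem_image.1 hq
    have h1 := hpt x hx
    unfold pt at h1
    rw [hSc]
    rcases le_total (X.filter (fun y => p y = p x)).card 2 with h | h
    · rw [min_eq_left h]
      exact Nat.mul_le_mul_right _ hW
    · rw [min_eq_right h]
      omega
  have : W * T.card ≤ W * (2 * m) := Nat.mul_le_mul_left _ hTc
  nlinarith

/-- The coloring where edges inside parts get a new colour. -/
def recol (c : V → V → κ) (p : V → V) (x y : V) : Option κ :=
  if p x = p y then none else some (c x y)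

lemma recol_free : ∀ {n : ℕ} {X : Finset V}, MFree c i n X → MFree (recol c p) (some i) n X
  | 0, _, h => h
  | n + 1, X, h => fun v hv => (recol_free (h v hv)).mono (by
      intro w hw
      rw [mem_nbh] at hw ⊢
      refine ⟨hw.1, hw.2.1, ?_⟩
      have := hw.2.2
      unfold recol at this
      split_ifs at this
      simpa using this)

lemma recol_gal (hG : GalOn c X) (hB : SplitB c X red blue p) : GalOn (recol c p) X := by
  obtain ⟨h1, h2, -, -⟩ := hB
  refine ⟨fun u v => ?_, fun u hu v hv w hw huv huw hvw => ?_⟩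
  · unfold recol
    rw [hG.1 u v]
    simp only [eq_comm]
  · unfold recol
    by_cases a : p u = p v
    · by_cases b : p u = p w
      · simp [a, ← b]
      · right; right
        have b' : p v ≠ p w := fun h => b (a.trans h)
        rw [if_neg b, if_neg b', h2 u hu v hv w hw a b]
    · by_cases b : p u = p w
      · right; left
        have b' : p v ≠ p w := fun h => a (b.trans h.symm)
        rw [if_neg a, if_neg b', h2 u hu w hw v hv b a, hG.1 v w]
      · by_cases d : p v = p w
        · left
          rw [if_neg a, if_neg b, hG.1 u v, hG.1 u w,
            h2 v hv w hw u hu d (fun h => a h.symm)]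
        · rw [if_neg a, if_neg b, if_neg d]
          simpa using hG.2 u hu v hv w hw huv huw hvw

lemma recol_other (hB : SplitB c X red blue p) {T : Finset V} (hTX : T ⊆ X)
    (hT : ∀ x ∈ X, (T.filter (fun y => p y = p x)).card ≤ 2) (j : Option κ)
    (h1 : j ≠ some red) (h2 : j ≠ some blue) : MFree (recol c p) j 1 T := by
  rcases j with _ | e
  · intro v hv
    have hsub : nbh (recol c p) none T v ⊆ (T.filter (fun y => p y = p v)).erase v := by
      intro w hw
      rw [mem_nbh] at hw
      rw [Finset.mem_erase, Finset.mem_filter]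
      refine ⟨hw.2.1, hw.1, ?_⟩
      have := hw.2.2
      unfold recol at this
      split_ifs at this with h
      exact h.symm
    have h3 := Finset.card_le_card hsub
    rw [Finset.card_erase_of_mem (by simp [hv])] at h3
    have := hT v (hTX hv)
    change (nbh (recol c p) none T v).card ≤ 1
    omega
  · refine NoEdge.free (fun x hx y hy _ hc => ?_)
    unfold recol at hc
    split_ifs at hc with h
    simp only [Option.some.injEq] at hc
    rcases hB.1 x (hTX hx) y (hTX hy) h with h' | h'
    · exact h1 (by rw [← hc, h'])
    · exact h2 (by rw [← hc, h'])

lemma light22 {W : ℕ} (hG : GalOn c X) (hB : SplitB c X red blue p) (hW : 2 ≤ W)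
    (hpt : ∀ x ∈ X, (pt p X x).card ≤ W) (hr : MFree c red 2 X) (hb : MFree c blue 2 X) :
    X.card ≤ W * 5 :=
  light hW hpt (fun T hTX hT => sm22 ((recol_gal hG hB).mono hTX) (recol_other hB hTX hT)
    (recol_free (hr.mono hTX)) (recol_free (hb.mono hTX)))

lemma light23 {W : ℕ} (hrb : red ≠ blue) (hG : GalOn c X) (hB : SplitB c X red blue p) (hW : 2 ≤ W)
    (hpt : ∀ x ∈ X, (pt p X x).card ≤ W) (hr : MFree c red 2 X) (hb : MFree c blue 3 X) :
    X.card ≤ W * 8 :=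
  light hW hpt (fun T hTX hT => sm32 (by simpa using hrb) ((recol_gal hG hB).mono hTX)
    (recol_other hB hTX hT) (recol_free (hr.mono hTX)) (recol_free (hb.mono hTX)))

lemma light33 {W : ℕ} (hrb : red ≠ blue) (hG : GalOn c X) (hB : SplitB c X red blue p) (hW : 2 ≤ W)
    (hpt : ∀ x ∈ X, (pt p X x).card ≤ W) (hr : MFree c red 3 X) (hb : MFree c blue 3 X) :
    X.card ≤ W * 17 :=
  light hW hpt (fun T hTX hT => sm33 (by simpa using hrb) ((recol_gal hG hB).mono hTX)
    (recol_other hB hTX hT) (recol_free (hr.mono hTX)) (recol_free (hb.mono hTX)))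


def Bd (c : V → V → κ) (X : Finset V) (red blue : κ) (a b g : ℕ) : Prop :=
  ∀ Y, Y ⊂ X → MFree c red a Y → MFree c blue b Y → Y.card ≤ g

lemma Bd.swap {a b g : ℕ} (h : Bd c X red blue a b g) : Bd c X blue red b a g :=
  fun Y hY h1 h2 => h Y hY h2 h1

lemma SplitB.swap (h : SplitB c X red blue p) : SplitB c X blue red p :=
  ⟨fun x hx y hy hne => (h.1 x hx y hy hne).symm, h.2.1, h.2.2.2, h.2.2.1⟩

lemma sb_cov (hB : SplitB c X red blue p) (hY : Y ⊆ X) {x : V} (hx : x ∈ X) :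
    Y.card ≤ (pt p X x).card + (Y ∩ nc c red p X x).card + (Y ∩ nc c blue p X x).card := by
  have hsub : Y ⊆ pt p X x ∪ (Y ∩ nc c red p X x) ∪ (Y ∩ nc c blue p X x) := by
    intro y hy
    simp only [Finset.mem_union, Finset.mem_inter, mem_pt, mem_nc]
    by_cases h : p y = p x
    · exact Or.inl (Or.inl ⟨hY hy, h⟩)
    · rcases hB.1 x hx y (hY hy) (fun e => h e.symm) with h' | h'
      · exact Or.inl (Or.inr ⟨hy, hY hy, h, h'⟩)
      · exact Or.inr ⟨hy, hY hy, h, h'⟩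
  have h1 := Finset.card_le_card hsub
  have h2 := Finset.card_union_le (pt p X x ∪ (Y ∩ nc c red p X x)) (Y ∩ nc c blue p X x)
  have h3 := Finset.card_union_le (pt p X x) (Y ∩ nc c red p X x)
  omega

lemma sb_covX (hB : SplitB c X red blue p) {x : V} (hx : x ∈ X) :
    X.card ≤ (pt p X x).card + (nc c red p X x).card + (nc c blue p X x).card := by
  have := sb_cov hB (Finset.Subset.refl X) hx
  rwa [Finset.inter_eq_right.2 (nc_sub x), Finset.inter_eq_right.2 (nc_sub x)] at this

lemma sb_join (hs : ∀ u v, c u v = c v u) (hB : SplitB c X red blue p) {x : V} (hx : x ∈ X)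
    (i : κ) : Join c i (pt p X x) (nc c i p X x) := by
  intro a ha b hb
  rw [mem_pt] at ha
  rw [mem_nc] at hb
  have hne : p a ≠ p b := fun h => hb.2.1 (h.symm.trans ha.2)
  have h := hB.2.1 a ha.1 x hx b hb.1 ha.2 hne
  exact ⟨fun h => hne (by rw [h]), h.trans hb.2.2, by rw [hs]; exact h.trans hb.2.2⟩

lemma sb_ne (hB : SplitB c X red blue p) {x : V} (hx : x ∈ X) : (nc c red p X x).Nonempty := by
  obtain ⟨y, hy, hne, hc⟩ := hB.2.2.1 x hx
  exact ⟨y, mem_nc.2 ⟨hy, hne.symm, hc⟩⟩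

lemma sb_ptss (hB : SplitB c X red blue p) {x : V} (hx : x ∈ X) : pt p X x ⊂ X := by
  refine (Finset.ssubset_iff_subset_ne).2 ⟨pt_sub x, fun h => ?_⟩
  obtain ⟨y, hy, hne, hc⟩ := hB.2.2.1 x hx
  rw [← h, mem_pt] at hy
  exact hne hy.2.symm

lemma nc_ss {x : V} (hx : x ∈ X) : nc c i p X x ⊂ X := by
  refine (Finset.ssubset_iff_subset_ne).2 ⟨nc_sub x, fun h => ?_⟩
  rw [← h, mem_nc] at hx
  exact hx.2.1 rfl

lemma sb_mut (hB : SplitB c X red blue p) (hY : Y ⊆ X) (hN : NoEdge c red Y) :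
    ∀ x ∈ Y, ∀ y ∈ Y, p x ≠ p y → c x y = blue := by
  intro x hx y hy hne
  exact (hB.1 x (hY hx) y (hY hy) hne).resolve_left
    (hN x hx y hy (fun h => hne (by rw [h])))

lemma sb_ptfree (hs : ∀ u v, c u v = c v u) (hB : SplitB c X red blue p) {x : V} (hx : x ∈ X)
    (h : MFree c red (n + 1) X) : MFree c red n (pt p X x) :=
  (sb_join hs hB hx red).free1 (pt_sub x) (nc_sub x) h (sb_ne hB hx)

lemma sb_ncfree (hs : ∀ u v, c u v = c v u) (hB : SplitB c X red blue p) {x : V} (hx : x ∈ X)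
    (h : MFree c i (n + 1) X) : MFree c i n (nc c i p X x) :=
  (sb_join hs hB hx i).symm.free1 (nc_sub x) (pt_sub x) h ⟨x, mem_pt.2 ⟨hx, rfl⟩⟩

lemma sb_ncno (hs : ∀ u v, c u v = c v u) (hB : SplitB c X red blue p) {x : V} (hx : x ∈ X)
    (h : MFree c i (n + 2) X) (hn : ¬ MFree c i n (pt p X x)) : NoEdge c i (nc c i p X x) := by
  by_contra h2
  exact hn ((sb_join hs hB hx i).free2 (pt_sub x) (nc_sub x) h h2)

lemma caseB22 {W : ℕ} (hG : GalOn c X) (hB : SplitB c X red blue p) (hW : 2 ≤ W)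
    (b11 : Bd c X red blue 1 1 W)
    (hr : MFree c red 2 X) (hb : MFree c blue 2 X) : X.card ≤ W * 5 :=
  light22 hG hB hW (fun x hx => b11 _ (sb_ptss hB hx) (sb_ptfree hG.1 hB hx hr)
    (sb_ptfree hG.1 hB.swap hx hb)) hr hb

lemma caseB23 {W W1 : ℕ} (hrb : red ≠ blue) (hG : GalOn c X) (hB : SplitB c X red blue p)
    (hW : 2 ≤ W) (b11 : Bd c X red blue 1 1 W) (b12 : Bd c X red blue 1 2 W1)
    (hr : MFree c red 2 X) (hb : MFree c blue 3 X) :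
    X.card ≤ W * 8 ∨ X.card ≤ 2 * W1 + 3 * W := by
  by_cases hall : ∀ x ∈ X, MFree c blue 1 (pt p X x)
  · exact Or.inl (light23 hrb hG hB hW (fun x hx => b11 _ (sb_ptss hB hx)
      (sb_ptfree hG.1 hB hx hr) (hall x hx)) hr hb)
  right
  push Not at hall
  obtain ⟨x, hx, hn⟩ := hall
  have h1 := b12 _ (sb_ptss hB hx) (sb_ptfree hG.1 hB hx hr) (sb_ptfree hG.1 hB.swap hx hb)
  have nb : NoEdge c blue (nc c blue p X x) := sb_ncno hG.1 hB hx hb hn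
  have nr : NoEdge c red (nc c red p X x) :=
    sb_ncno (n := 0) hG.1 hB hx hr (fun h => hn (MFree.succ (n := 0) h))
  have h2 : (nc c blue p X x).card ≤ 2 * W := lemM' (i := red) (p := p) hG.1 (nc_sub x)
    (sb_mut hB.swap (nc_sub x) nb) (fun y hy => sb_ptfree hG.1 hB (nc_sub x hy) hr)
    (hr.mono (nc_sub x))
    (fun Z hZ hz => b11 Z (hZ.trans_ssubset (nc_ss hx)) hz (nb.mono hZ).free)
  have h3 : (nc c red p X x).card ≤ W + W1 := lemM (i := blue) (p := p) hG.1 (nc_sub x)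
    (sb_mut hB (nc_sub x) nr) (fun y hy => sb_ptfree hG.1 hB.swap (nc_sub x hy) hb)
    (hb.mono (nc_sub x))
    (fun Z hZ hz => b11 Z (hZ.trans_ssubset (nc_ss hx)) (nr.mono hZ).free hz)
    (fun Z hZ hz => b12 Z (hZ.trans_ssubset (nc_ss hx)) (nr.mono hZ).free hz)
  have := sb_covX hB hx
  omega

lemma caseB33' {W W1 W2 W3 : ℕ} (hG : GalOn c X) (hB : SplitB c X red blue p)
    (b11 : Bd c X red blue 1 1 W) (b12 : Bd c X red blue 1 2 W1)
    (b21 : Bd c X red blue 2 1 W1) (b22 : Bd c X red blue 2 2 W2) (b31 : Bd c X red blue 3 1 W3)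
    (hr : MFree c red 3 X) (hb : MFree c blue 3 X) {x : V} (hx : x ∈ X)
    (hn : ¬ MFree c red 1 (pt p X x)) :
    X.card ≤ W2 + (W + W1) + W3 ∨ X.card ≤ W1 + (W + W1) + 2 * W2 ∨
    X.card ≤ W1 + (W + W1) + (3 * W + 2 * W1) ∨ X.card ≤ W1 + (W + W1) + (2 * W + W1 + W2) := by
  have hs := hG.1
  have nr : NoEdge c red (nc c red p X x) := sb_ncno hs hB hx hr hn
  have h3 : (nc c red p X x).card ≤ W + W1 := lemM (i := blue) (p := p) hs (nc_sub x)
    (sb_mut hB (nc_sub x) nr) (fun y hy => sb_ptfree hs hB.swap (nc_sub x hy) hb)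
    (hb.mono (nc_sub x))
    (fun Z hZ hz => b11 Z (hZ.trans_ssubset (nc_ss hx)) (nr.mono hZ).free hz)
    (fun Z hZ hz => b12 Z (hZ.trans_ssubset (nc_ss hx)) (nr.mono hZ).free hz)
  have hcov := sb_covX hB hx
  have hj := sb_join hs hB hx blue
  have pr : MFree c red 2 (pt p X x) := sb_ptfree hs hB hx hr
  have pb : MFree c blue 2 (pt p X x) := sb_ptfree hs hB.swap hx hb
  by_cases hne : NoEdge c blue (pt p X x)
  swap
  · left
    have h1 := b22 _ (sb_ptss hB hx) pr pb
    have h2 := b31 _ (nc_ss hx) (hr.mono (nc_sub x))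
      (hj.symm.free2 (nc_sub x) (pt_sub x) hb hne)
    omega
  right
  have h1 := b21 _ (sb_ptss hB hx) pr hne.free
  set N := nc c blue p X x with hN
  have hNX : N ⊆ X := nc_sub x
  have hNss : N ⊂ X := nc_ss hx
  have hN2 : MFree c blue 2 N := sb_ncfree hs hB hx hb
  have hNr : MFree c red 3 N := hr.mono hNX
  have tri : ∀ a ∈ N, ∀ b ∈ N, ∀ d ∈ N, a ≠ b → a ≠ d → b ≠ d → c a b = blue → c a d = blue →
      c b d = blue → False := by
    intro a ha b hb' d hd hab had hbd e1 e2 e3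
    have s1 : MFree c blue 2 (insert b (insert d (pt p X x))) := hb.step (hNX ha)
      (Finset.insert_subset (hNX hb') (Finset.insert_subset (hNX hd) (pt_sub x))) (by
        intro y hy
        rcases Finset.mem_insert.1 hy with rfl | hy
        · exact ⟨hab.symm, e1⟩
        rcases Finset.mem_insert.1 hy with rfl | hy
        · exact ⟨had.symm, e2⟩
        exact ⟨(hj y hy a ha).1, (hj y hy a ha).2.2⟩)
    have s2 : MFree c blue 1 (insert d (pt p X x)) := s1.step (Finset.mem_insert_self _ _)
      (Finset.subset_insert _ _) (by
        intro y hy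
        rcases Finset.mem_insert.1 hy with rfl | hy
        · exact ⟨hbd.symm, e3⟩
        exact ⟨(hj y hy b hb').1, (hj y hy b hb').2.2⟩)
    have s3 : MFree c blue 0 (pt p X x) := s2.step (Finset.mem_insert_self _ _)
      (Finset.subset_insert _ _) (fun y hy => ⟨(hj y hy d hd).1, (hj y hy d hd).2.2⟩)
    exact hn (MFree.succ (n := 0) s3)
  have ptN : ∀ u ∈ N, pt p X u ⊆ N := by
    intro u hu y hy
    rw [hN, mem_nc] at hu ⊢
    rw [mem_pt] at hy
    refine ⟨hy.1, by rw [hy.2]; exact hu.2.1, ?_⟩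
    rw [hs, hB.2.1 y hy.1 u hu.1 x hx hy.2 (by rw [hy.2]; exact hu.2.1), hs]
    exact hu.2.2
  have noBl : ∀ u ∈ N, NoEdge c blue (N ∩ nc c blue p X u) := by
    intro u hu a ha b hb' hab hc
    rw [Finset.mem_inter, mem_nc (x := u)] at ha hb'
    exact tri u hu a ha.1 b hb'.1 (fun h => ha.2.2.1 (by rw [h])) (fun h => hb'.2.2.1 (by rw [h]))
      hab ha.2.2.2 hb'.2.2.2 hc
  have cN : ∀ u ∈ N, N.card ≤ (pt p X u).card + (N ∩ nc c red p X u).card +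
      (N ∩ nc c blue p X u).card := fun u hu => sb_cov hB hNX (hNX hu)
  have iN : ∀ i u, N ∩ nc c i p X u ⊆ N := fun i u => Finset.inter_subset_left
  have iR : ∀ u ∈ N, MFree c red 2 (N ∩ nc c red p X u) := fun u hu =>
    (sb_ncfree hs hB (hNX hu) hr).mono Finset.inter_subset_right
  have R22 : ∀ u ∈ N, (N ∩ nc c red p X u).card ≤ W2 := fun u hu =>
    b22 _ ((iN red u).trans_ssubset hNss) (iR u hu) (hN2.mono (iN red u))
  have ptr : ∀ u ∈ N, MFree c red 2 (pt p X u) := fun u hu => sb_ptfree hs hB (hNX hu) hr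
  have BlB : ∀ u ∈ N, (N ∩ nc c blue p X u).card ≤ W + W1 := fun u hu =>
    lemM (i := red) (p := p) hs ((iN blue u).trans hNX)
      (sb_mut hB.swap ((iN blue u).trans hNX) (noBl u hu)) (fun y hy => ptr y (iN blue u hy))
      (hNr.mono (iN blue u))
      (fun Z hZ hz => b11 Z ((hZ.trans (iN blue u)).trans_ssubset hNss) hz
        ((noBl u hu).mono hZ).free)
      (fun Z hZ hz => b21 Z ((hZ.trans (iN blue u)).trans_ssubset hNss) hz
        ((noBl u hu).mono hZ).free)
  by_cases k1 : ∀ u ∈ N, NoEdge c blue (pt p X u)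
  swap
  · left
    push Not at k1
    obtain ⟨u, hu, k1⟩ := k1
    unfold NoEdge at k1
    push Not at k1
    obtain ⟨y, hy, z, hz, hyz, hc⟩ := k1
    have hE : (N ∩ nc c blue p X u) = ∅ := by
      rw [Finset.eq_empty_iff_forall_notMem]
      intro b hb'
      rw [Finset.mem_inter] at hb'
      have hj2 := sb_join hs hB (hNX hu) blue
      exact tri y (ptN u hu hy) z (ptN u hu hz) b hb'.1 hyz (hj2 y hy b hb'.2).1
        (hj2 z hz b hb'.2).1 hc (hj2 y hy b hb'.2).2.1 (hj2 z hz b hb'.2).2.1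
    have g1 := cN u hu
    rw [hE, Finset.card_empty] at g1
    have g2 := R22 u hu
    have g3 := b22 _ (sb_ptss hB (hNX hu)) (ptr u hu) (hN2.mono (ptN u hu))
    omega
  right
  by_cases k2 : ∀ u ∈ N, MFree c red 1 (pt p X u)
  swap
  · left
    push Not at k2
    obtain ⟨u, hu, k2⟩ := k2
    have g1 := cN u hu
    have g2 := BlB u hu
    have g3 := b21 _ (sb_ptss hB (hNX hu)) (ptr u hu) (k1 u hu).free
    have nR : NoEdge c red (N ∩ nc c red p X u) :=
      (sb_ncno hs hB (hNX hu) hr k2).mono Finset.inter_subset_right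
    have g4 : (N ∩ nc c red p X u).card ≤ 2 * W :=
      lemM' (i := blue) (p := p) hs ((iN red u).trans hNX)
      (sb_mut hB ((iN red u).trans hNX) nR) (fun y hy => (k1 y (iN red u hy)).free)
      (hN2.mono (iN red u))
      (fun Z hZ hz => b11 Z ((hZ.trans (iN red u)).trans_ssubset hNss) (nR.mono hZ).free hz)
    omega
  · right
    obtain ⟨u, hu⟩ : N.Nonempty := sb_ne hB.swap hx
    have g1 := cN u hu
    have g2 := BlB u hu
    have g3 := b11 _ (sb_ptss hB (hNX hu)) (k2 u hu) (k1 u hu).free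
    have g4 := R22 u hu
    omega

lemma caseB33 {W W1 W2 W3 : ℕ} (hrb : red ≠ blue) (hG : GalOn c X) (hB : SplitB c X red blue p)
    (hW : 2 ≤ W)
    (b11 : Bd c X red blue 1 1 W) (b12 : Bd c X red blue 1 2 W1)
    (b21 : Bd c X red blue 2 1 W1) (b22 : Bd c X red blue 2 2 W2) (b31 : Bd c X red blue 3 1 W3)
    (b13 : Bd c X red blue 1 3 W3) (hr : MFree c red 3 X) (hb : MFree c blue 3 X) :
    X.card ≤ W * 17 ∨
    X.card ≤ W2 + (W + W1) + W3 ∨ X.card ≤ W1 + (W + W1) + 2 * W2 ∨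
    X.card ≤ W1 + (W + W1) + (3 * W + 2 * W1) ∨ X.card ≤ W1 + (W + W1) + (2 * W + W1 + W2) := by
  by_cases hall : ∀ x ∈ X, MFree c red 1 (pt p X x)
  swap
  · push Not at hall
    obtain ⟨x, hx, hn⟩ := hall
    exact Or.inr (caseB33' hG hB b11 b12 b21 b22 b31 hr hb hx hn)
  by_cases hall' : ∀ x ∈ X, MFree c blue 1 (pt p X x)
  swap
  · push Not at hall'
    obtain ⟨x, hx, hn⟩ := hall'
    exact Or.inr (caseB33' hG hB.swap b11.swap b21.swap b12.swap b22.swap b13.swap hb hr hx hn)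
  exact Or.inl (light33 hrb hG hB hW (fun x hx => b11 _ (sb_ptss hB hx) (hall x hx)
    (hall' x hx)) hr hb)

lemma sb_one (hG : GalOn c X) (hB : SplitB c X red blue p) (hne : X.Nonempty)
    (hr : MFree c red 1 X) : SplitA c X := by
  have hs := hG.1
  obtain ⟨x, hx⟩ := hne
  obtain ⟨y, hy, hpxy, hc⟩ := hB.2.2.1 x hx
  have hxy : x ≠ y := fun h => hpxy (by rw [h])
  have key : ∀ x ∈ X, ∀ y ∈ X, p x ≠ p y → c x y = red → ∀ b ∈ X, b ≠ x → b ≠ y →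
      c x b = blue := by
    intro x hx y hy hp hc b hb hbx hby
    have hxy : x ≠ y := fun h => hp (by rw [h])
    have uniq : ∀ v ∈ X, ∀ a ∈ X, ∀ b ∈ X, a ≠ v → b ≠ v → c v a = red → c v b = red → a = b := by
      intro v hv a ha b hb hav hbv e1 e2
      exact Finset.card_le_one.1 (hr v hv) a (mem_nbh.2 ⟨ha, hav, e1⟩) b (mem_nbh.2 ⟨hb, hbv, e2⟩)
    have hpb : p x ≠ p b := by
      intro h
      have := hB.2.1 x hx b hb y hy h hp
      exact hbx (uniq y hy x hx b hb hxy hby (by rw [hs]; exact hc)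
        (by rw [hs, ← this]; exact hc)).symm
    refine (hB.1 x hx b hb hpb).resolve_left (fun h => ?_)
    exact hby (uniq x hx y hy b hb hxy.symm hbx hc h).symm
  by_cases hE : (X \ {x, y}).Nonempty
  · refine ⟨blue, {x, y}, X \ {x, y}, ⟨x, by simp⟩, hE, Finset.disjoint_sdiff,
      Finset.union_sdiff_of_subset ?_, ?_⟩
    · intro z hz
      rcases Finset.mem_insert.1 hz with rfl | hz
      · exact hx
      · rw [Finset.mem_singleton.1 hz]; exact hy
    · intro a ha b hb
      simp only [Finset.mem_sdiff, Finset.mem_insert, Finset.mem_singleton, not_or] at hb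
      rcases Finset.mem_insert.1 ha with rfl | ha
      · exact key _ hx y hy hpxy hc b hb.1 hb.2.1 hb.2.2
      · rw [Finset.mem_singleton.1 ha]
        exact key _ hy x hx hpxy.symm (by rw [hs]; exact hc) b hb.1 hb.2.2 hb.2.1
  · rw [Finset.not_nonempty_iff_eq_empty, Finset.sdiff_eq_empty_iff_subset] at hE
    refine ⟨red, {x}, {y}, ⟨x, by simp⟩, ⟨y, by simp⟩, by simpa using hxy, ?_, ?_⟩
    · apply Finset.Subset.antisymm
      · intro z hz
        simp only [Finset.mem_union, Finset.mem_singleton] at hz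
        rcases hz with rfl | rfl
        · exact hx
        · exact hy
      · intro z hz
        have := hE hz
        simp only [Finset.mem_union, Finset.mem_insert, Finset.mem_singleton] at this ⊢
        exact this
    · intro a ha b hb
      rw [Finset.mem_singleton] at ha hb
      rw [ha, hb]
      exact hc


def cnt [Fintype κ] (t : κ → ℕ) (a : ℕ) : ℕ := (Finset.univ.filter (fun i => t i = a)).card

lemma cnt_upd [Fintype κ] (t : κ → ℕ) (i : κ) (b a : ℕ) :
    cnt (Function.update t i b) a + (if t i = a then 1 else 0)
      = cnt t a + (if b = a then 1 else 0) := by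
  unfold cnt
  rw [Finset.card_filter, Finset.card_filter, ← Finset.add_sum_erase _ _ (Finset.mem_univ i),
    ← Finset.add_sum_erase Finset.univ (fun j => if t j = a then 1 else 0) (Finset.mem_univ i)]
  have : ∑ x ∈ Finset.univ.erase i, (if Function.update t i b x = a then 1 else 0)
      = ∑ x ∈ Finset.univ.erase i, (if t x = a then 1 else 0) := by
    refine Finset.sum_congr rfl (fun x hx => ?_)
    rw [Function.update_of_ne (Finset.mem_erase.1 hx).1]
  rw [this]
  simp only [Function.update_self]
  omega

lemma cnt_upd2 [Fintype κ] (hrb : red ≠ blue) (t : κ → ℕ) (a b x : ℕ) :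
    cnt (Function.update (Function.update t red a) blue b) x + (if t red = x then 1 else 0)
      + (if t blue = x then 1 else 0)
      = cnt t x + (if a = x then 1 else 0) + (if b = x then 1 else 0) := by
  have h1 := cnt_upd (Function.update t red a) blue b x
  rw [Function.update_of_ne hrb.symm] at h1
  have h2 := cnt_upd t red a x
  omega

theorem main_upper [Fintype κ] : ∀ (N : ℕ) (X : Finset V) (t : κ → ℕ), X.card = N → GalOn c X →
    (∀ i, 1 ≤ t i ∧ t i ≤ 3) → (∀ i, MFree c i (t i) X) → X.card ≤ FF (cnt t 2) (cnt t 3) := by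
  intro N
  induction N using Nat.strong_induction_on with
  | _ N ih =>
  intro X t hN hG ht hF
  have hFF := FF_facts (cnt t 2) (cnt t 3)
  rcases Nat.lt_or_ge X.card 2 with hlt | h2
  · omega
  have IH : ∀ (Y : Finset V) (t' : κ → ℕ), Y ⊂ X → (∀ i, 1 ≤ t' i ∧ t' i ≤ 3) →
      (∀ i, MFree c i (t' i) Y) → Y.card ≤ FF (cnt t' 2) (cnt t' 3) := fun Y t' hY ht' hF' =>
    ih Y.card (hN ▸ Finset.card_lt_card hY) Y t' rfl (hG.mono hY.1) ht' hF'
  have hA : SplitA c X → X.card ≤ FF (cnt t 2) (cnt t 3) := by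
    rintro ⟨i, A, B, hAn, hBn, hd, rfl, hj⟩
    rw [Finset.card_union_of_disjoint hd]
    have hAs : A ⊆ A ∪ B := Finset.subset_union_left
    have hBs : B ⊆ A ∪ B := Finset.subset_union_right
    have hAss : A ⊂ A ∪ B := by
      refine (Finset.ssubset_iff_subset_ne).2 ⟨hAs, fun h => ?_⟩
      obtain ⟨b, hb⟩ := hBn
      exact Finset.disjoint_left.1 hd (h ▸ hBs hb) hb
    have hBss : B ⊂ A ∪ B := by
      refine (Finset.ssubset_iff_subset_ne).2 ⟨hBs, fun h => ?_⟩
      obtain ⟨b, hb⟩ := hAn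
      exact Finset.disjoint_left.1 hd hb (h ▸ hAs hb)
    have hJ : Join c i A B := fun a ha b hb =>
      ⟨fun h => Finset.disjoint_left.1 hd ha (h ▸ hb), hj a ha b hb, by rw [hG.1]; exact hj a ha b hb⟩
    have bd : ∀ (Y : Finset V) (a s' r' : ℕ), Y ⊂ A ∪ B → 1 ≤ a → a ≤ 3 →
        s' + (if t i = 2 then 1 else 0) = cnt t 2 + (if a = 2 then 1 else 0) →
        r' + (if t i = 3 then 1 else 0) = cnt t 3 + (if a = 3 then 1 else 0) →
        MFree c i a Y → Y.card ≤ FF s' r' := by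
      intro Y a s' r' hY h1 h3 es er hf
      have e2 := cnt_upd t i a 2
      have e3 := cnt_upd t i a 3
      have := IH Y (Function.update t i a) hY (fun j => by
          by_cases h : j = i
          · subst h; simp [h1, h3]
          · rw [Function.update_of_ne h]; exact ht j) (fun j => by
          by_cases h : j = i
          · subst h; simpa using hf
          · rw [Function.update_of_ne h]; exact (hF j).mono hY.1)
      rwa [show cnt (Function.update t i a) 2 = s' by omega,
        show cnt (Function.update t i a) 3 = r' by omega] at this
    have hFi := hF i
    have e2 := cnt_upd t i 1 2
    have e3 := cnt_upd t i 1 3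
    obtain ht1 | ht1 | ht1 : t i = 1 ∨ t i = 2 ∨ t i = 3 := by
      have := ht i
      omega
    · rw [ht1] at hFi
      have g1 : A.card ≤ 1 := hJ.free1 (n := 0) hAs hBs hFi hBn
      have g2 : B.card ≤ 1 := hJ.symm.free1 (n := 0) hBs hAs hFi hAn
      omega
    · rw [ht1] at hFi bd e2 e3
      obtain ⟨s, hs⟩ : ∃ s, cnt t 2 = s + 1 := ⟨_, by simpa using e2.symm⟩
      have g1 := bd A 1 s (cnt t 3) hAss (by omega) (by omega) (by simp [hs]) (by simp)
        (hJ.free1 hAs hBs hFi hBn)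
      have g2 := bd B 1 s (cnt t 3) hBss (by omega) (by omega) (by simp [hs]) (by simp)
        (hJ.symm.free1 hBs hAs hFi hAn)
      have := FF_facts s (cnt t 3)
      rw [hs]
      omega
    · rw [ht1] at hFi bd e2 e3
      obtain ⟨r, hr⟩ : ∃ r, cnt t 3 = r + 1 := ⟨_, by simpa using e3.symm⟩
      have b1 := fun Y hY => bd Y 1 (cnt t 2) r hY (by omega) (by omega) (by simp) (by simp [hr])
      have b2 := fun Y hY => bd Y 2 (cnt t 2 + 1) r hY (by omega) (by omega) (by simp)
        (by simp [hr])
      have := FF_facts (cnt t 2) r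
      rw [hr]
      rcases joinH hJ hAs hBs hFi hAn hBn with ⟨k1, k2⟩ | ⟨k1, k2⟩
      · have := b2 A hAss k1
        have := b1 B hBss k2
        omega
      · have := b1 A hAss k1
        have := b2 B hBss k2
        omega
  rcases decomp X.card X rfl hG h2 with h | ⟨red, blue, p, hrb, hB⟩
  · exact hA h
  have hXn : X.Nonempty := Finset.card_pos.1 (by omega)
  have bd : ∀ (a b s' r' : ℕ), 1 ≤ a → a ≤ 3 → 1 ≤ b → b ≤ 3 →
      s' + (if t red = 2 then 1 else 0) + (if t blue = 2 then 1 else 0)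
        = cnt t 2 + (if a = 2 then 1 else 0) + (if b = 2 then 1 else 0) →
      r' + (if t red = 3 then 1 else 0) + (if t blue = 3 then 1 else 0)
        = cnt t 3 + (if a = 3 then 1 else 0) + (if b = 3 then 1 else 0) →
      Bd c X red blue a b (FF s' r') := by
    intro a b s' r' ha1 ha3 hb1 hb3 es er Y hY hfa hfb
    have e2 := cnt_upd2 hrb t a b 2
    have e3 := cnt_upd2 hrb t a b 3
    have := IH Y (Function.update (Function.update t red a) blue b) hY (fun j => by
        by_cases h : j = blue
        · subst h; simp [hb1, hb3]
        · rw [Function.update_of_ne h]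
          by_cases h : j = red
          · subst h; simp [ha1, ha3]
          · rw [Function.update_of_ne h]; exact ht j) (fun j => by
        by_cases h : j = blue
        · subst h; simpa using hfb
        · rw [Function.update_of_ne h]
          by_cases h : j = red
          · subst h; simpa using hfa
          · rw [Function.update_of_ne h]; exact (hF j).mono hY.1)
    rwa [show cnt (Function.update (Function.update t red a) blue b) 2 = s' by omega,
      show cnt (Function.update (Function.update t red a) blue b) 3 = r' by omega] at this
  have hFr := hF red
  have hFb := hF blue
  have e2 := cnt_upd2 hrb t 1 1 2
  have e3 := cnt_upd2 hrb t 1 1 3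
  have tr := ht red
  have tb := ht blue
  obtain h1 | ⟨h1, h2⟩ | ⟨h1, h2⟩ | ⟨h1, h2⟩ | ⟨h1, h2⟩ :
      (t red = 1 ∨ t blue = 1) ∨ (t red = 2 ∧ t blue = 2) ∨ (t red = 2 ∧ t blue = 3) ∨
      (t red = 3 ∧ t blue = 2) ∨ (t red = 3 ∧ t blue = 3) := by omega
  · rcases h1 with h1 | h1
    · rw [h1] at hFr
      exact hA (sb_one hG hB hXn hFr)
    · rw [h1] at hFb
      exact hA (sb_one hG hB.swap hXn hFb)
  · rw [h1] at hFr bd e2 e3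
    rw [h2] at hFb bd e2 e3
    obtain ⟨s, hs⟩ : ∃ s, cnt t 2 = s + 2 := ⟨_, by simpa using e2.symm⟩
    have := FF_facts s (cnt t 3)
    have := caseB22 hG hB this.1 (bd 1 1 s (cnt t 3) (by simp) (by simp) (by simp) (by simp)
      (by simp [hs]) (by simp)) hFr hFb
    rw [hs]
    omega
  · rw [h1] at hFr bd e2 e3
    rw [h2] at hFb bd e2 e3
    obtain ⟨s, hs⟩ : ∃ s, cnt t 2 = s + 1 := ⟨_, by simpa using e2.symm⟩
    obtain ⟨r, hr⟩ : ∃ r, cnt t 3 = r + 1 := ⟨_, by simpa using e3.symm⟩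
    have := FF_facts s r
    have := caseB23 hrb hG hB this.1
      (bd 1 1 s r (by simp) (by simp) (by simp) (by simp) (by simp [hs]) (by simp [hr]))
      (bd 1 2 (s + 1) r (by simp) (by simp) (by simp) (by simp) (by simp [hs]) (by simp [hr]))
      hFr hFb
    rw [hs, hr]
    omega
  · rw [h1] at hFr bd e2 e3
    rw [h2] at hFb bd e2 e3
    obtain ⟨s, hs⟩ : ∃ s, cnt t 2 = s + 1 := ⟨_, by simpa using e2.symm⟩
    obtain ⟨r, hr⟩ : ∃ r, cnt t 3 = r + 1 := ⟨_, by simpa using e3.symm⟩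
    have := FF_facts s r
    have := caseB23 hrb.symm hG hB.swap this.1
      (bd 1 1 s r (by simp) (by simp) (by simp) (by simp) (by simp [hs]) (by simp [hr])).swap
      (bd 2 1 (s + 1) r (by simp) (by simp) (by simp) (by simp) (by simp [hs]) (by simp [hr])).swap
      hFb hFr
    rw [hs, hr]
    omega
  · rw [h1] at hFr bd e2 e3
    rw [h2] at hFb bd e2 e3
    obtain ⟨r, hr⟩ : ∃ r, cnt t 3 = r + 2 := ⟨_, by simpa using e3.symm⟩
    have := FF_facts (cnt t 2) r
    have := caseB33 hrb hG hB this.1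
      (bd 1 1 (cnt t 2) r (by simp) (by simp) (by simp) (by simp) (by simp) (by simp [hr]))
      (bd 1 2 (cnt t 2 + 1) r (by simp) (by simp) (by simp) (by simp) (by simp) (by simp [hr]))
      (bd 2 1 (cnt t 2 + 1) r (by simp) (by simp) (by simp) (by simp) (by simp) (by simp [hr]))
      (bd 2 2 (cnt t 2 + 2) r (by simp) (by simp) (by simp) (by simp) (by simp) (by simp [hr]))
      (bd 3 1 (cnt t 2) (r + 1) (by simp) (by simp) (by simp) (by simp) (by simp) (by simp [hr]))
      (bd 1 3 (cnt t 2) (r + 1) (by simp) (by simp) (by simp) (by simp) (by simp) (by simp [hr]))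
      hFr hFb
    rw [hr]
    have e : FF (cnt t 2) (r + 2) = 17 * FF (cnt t 2) r := rfl
    omega

/-! ### Lower bound -/

/-- `NoL R n`: the relation has no edge / no path / no triangle / no `K₄`. -/
def NoL {V : Type} (R : V → V → Prop) : ℕ → Prop
  | 0 => ∀ a b, a ≠ b → ¬ R a b
  | 1 => ∀ a b, a ≠ b → R a b → ∀ d, a ≠ d → b ≠ d → ¬ R b d
  | 2 => ∀ a b, a ≠ b → R a b → ∀ d, a ≠ d → b ≠ d → R a d → ¬ R b d
  | _ + 3 => ∀ a b, a ≠ b → R a b → ∀ d, a ≠ d → b ≠ d → R a d → R b d →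
      ∀ e, a ≠ e → b ≠ e → d ≠ e → R a e → R b e → ¬ R d e

def LGood {V : Type} (c : V → V → ℕ) (lev : ℕ → ℕ) : Prop :=
  (∀ u v, c u v = c v u) ∧
  (∀ u v w, u ≠ v → u ≠ w → v ≠ w → c u v = c u w ∨ c u v = c v w ∨ c u w = c v w) ∧
  ∀ i, NoL (fun u v => c u v = i) (lev i)

lemma NoL.map {V W : Type} {R : V → V → Prop} {S : W → W → Prop} {f : V → W} {n : ℕ}
    (hn : 2 ≤ n) (h : NoL S n) (hf : ∀ x y, x ≠ y → R x y → f x ≠ f y ∧ S (f x) (f y)) :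
    NoL R n := by
  match n, hn, h with
  | 2, _, h =>
    intro a b hab r1 d had hbd r2 r3
    exact h _ _ (hf a b hab r1).1 (hf a b hab r1).2 _ (hf a d had r2).1 (hf b d hbd r3).1
      (hf a d had r2).2 (hf b d hbd r3).2
  | n + 3, _, h =>
    intro a b hab r1 d had hbd r2 r3 e hae hbe hde r4 r5 r6
    exact h _ _ (hf a b hab r1).1 (hf a b hab r1).2 _ (hf a d had r2).1 (hf b d hbd r3).1
      (hf a d had r2).2 (hf b d hbd r3).2 _ (hf a e hae r4).1 (hf b e hbe r5).1
      (hf d e hde r6).1 (hf a e hae r4).2 (hf b e hbe r5).2 (hf d e hde r6).2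

lemma NoL.comap {V W : Type} {S : W → W → Prop} {f : V → W} {n : ℕ} (hi : Function.Injective f)
    (h : NoL S n) : NoL (fun x y => S (f x) (f y)) n := by
  match n, h with
  | 0, h => exact fun a b hab => h _ _ (hi.ne hab)
  | 1, h => exact fun a b hab r d had hbd => h _ _ (hi.ne hab) r _ (hi.ne had) (hi.ne hbd)
  | 2, h => exact h.map (f := f) (by omega) (fun x y hxy r => ⟨hi.ne hxy, r⟩)
  | n + 3, h => exact h.map (f := f) (by omega) (fun x y hxy r => ⟨hi.ne hxy, r⟩)

lemma LGood.comap {V W : Type} {c : W → W → ℕ} {lev : ℕ → ℕ} {f : V → W}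
    (hi : Function.Injective f) (h : LGood c lev) : LGood (fun x y => c (f x) (f y)) lev :=
  ⟨fun u v => h.1 _ _, fun u v w a b d => h.2.1 _ _ _ (hi.ne a) (hi.ne b) (hi.ne d),
    fun i => (h.2.2 i).comap hi⟩

lemma NoL.fib {V W : Type} {S : V → V → Prop} {R : W × V → W × V → Prop} {n : ℕ} (h : NoL S n)
    (hR : ∀ x y, x ≠ y → R x y → x.1 = y.1 ∧ S x.2 y.2) : NoL R n := by
  have hne : ∀ x y : W × V, x ≠ y → x.1 = y.1 → x.2 ≠ y.2 :=
    fun x y hxy e e' => hxy (Prod.ext e e')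
  have hf : ∀ x y, x ≠ y → R x y → x.2 ≠ y.2 ∧ S x.2 y.2 := fun x y hxy r =>
    ⟨hne x y hxy (hR x y hxy r).1, (hR x y hxy r).2⟩
  match n, h with
  | 0, h => exact fun a b hab r => h _ _ (hf a b hab r).1 (hf a b hab r).2
  | 1, h =>
    intro a b hab r d had hbd r'
    have e := (hR a b hab r).1.trans (hR b d hbd r').1
    exact h _ _ (hf a b hab r).1 (hf a b hab r).2 _ (hne a d had e) (hf b d hbd r').1
      (hf b d hbd r').2
  | 2, h => exact h.map (f := Prod.snd) (by omega) hf
  | n + 3, h => exact h.map (f := Prod.snd) (by omega) hf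

lemma LGood.base {W : Type} {g : W → W → Bool} (hg : ∀ u v, g u v = g v u) {a b la lb : ℕ}
    (hab : a ≠ b) (ha : NoL (fun u v => g u v = true) la) (hb : NoL (fun u v => g u v = false) lb) :
    LGood (fun u v => if g u v = true then a else b)
      (fun i => if i = a then la else if i = b then lb else 0) := by
  refine ⟨fun u v => by simp only [hg], fun u v w _ _ _ => ?_, fun i => ?_⟩
  · dsimp only
    cases g u v <;> cases g u w <;> cases g v w <;> simp
  · by_cases h1 : i = a
    · subst h1
      have : (fun u v => (if g u v = true then i else b) = i) = (fun u v => g u v = true) := by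
        funext u v
        cases g u v <;> simp [hab.symm]
      simp only [if_true]
      rw [this]
      exact ha
    · by_cases h2 : i = b
      · subst h2
        have : (fun u v => (if g u v = true then a else i) = i) = (fun u v => g u v = false) := by
          funext u v
          cases g u v <;> simp [hab]
        simp only [h1, if_true, if_false]
        rw [this]
        exact hb
      · simp only [h1, h2, if_false]
        intro u v _
        change ¬ (if g u v = true then a else b) = i
        split_ifs
        · exact Ne.symm h1
        · exact Ne.symm h2

lemma LGood.prod {V W : Type} [DecidableEq W] {c : V → V → ℕ} {lev : ℕ → ℕ} (h : LGood c lev)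
    {g : W → W → Bool} (hg : ∀ u v, g u v = g v u) {a b la lb : ℕ} (hab : a ≠ b)
    (hla : 2 ≤ la) (hlb : 2 ≤ lb)
    (ha : NoL (fun u v => g u v = true) la) (hb : NoL (fun u v => g u v = false) lb)
    (ea : lev a = 0) (eb : lev b = 0) :
    LGood (fun x y : W × V => if x.1 = y.1 then c x.2 y.2 else if g x.1 y.1 = true then a else b)
      (fun i => if i = a then la else if i = b then lb else lev i) := by
  have hne : ∀ x y : W × V, x ≠ y → x.1 = y.1 → x.2 ≠ y.2 :=
    fun x y hxy e e' => hxy (Prod.ext e e')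
  have ua := h.2.2 a
  have ub := h.2.2 b
  rw [ea] at ua
  rw [eb] at ub
  refine ⟨fun u v => ?_, fun u v w huv huw hvw => ?_, fun i => ?_⟩
  · dsimp only
    rw [hg u.1 v.1, h.1 u.2 v.2]
    simp only [eq_comm]
  · dsimp only
    by_cases e1 : u.1 = v.1
    · by_cases e2 : u.1 = w.1
      · have e3 : v.1 = w.1 := e1.symm.trans e2
        simp only [e1, e3, if_true]
        exact h.2.1 _ _ _ (hne u v huv e1) (hne u w huw e2) (hne v w hvw e3)
      · right; right
        have e3 : ¬ v.1 = w.1 := fun e => e2 (e1.trans e)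
        rw [if_neg e2, if_neg e3, e1]
    · by_cases e2 : u.1 = w.1
      · rw [← e2]
        simp [e1, Ne.symm e1, hg v.1 u.1]
      · by_cases e3 : v.1 = w.1
        · rw [← e3]
          simp [e1]
        · simp only [e1, e2, e3, if_false]
          cases g u.1 v.1 <;> cases g u.1 w.1 <;> cases g v.1 w.1 <;> simp
  · by_cases h1 : i = a
    · subst h1
      simp only [if_true]
      refine ha.map (f := Prod.fst) hla (fun x y hxy r => ?_)
      by_cases e : x.1 = y.1
      · rw [if_pos e] at r
        exact absurd r (ua _ _ (hne x y hxy e))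
      · refine ⟨e, ?_⟩
        rw [if_neg e] at r
        by_contra hc
        rw [if_neg hc] at r
        exact hab r.symm
    · by_cases h2 : i = b
      · subst h2
        simp only [h1, if_true, if_false]
        refine hb.map (f := Prod.fst) hlb (fun x y hxy r => ?_)
        by_cases e : x.1 = y.1
        · rw [if_pos e] at r
          exact absurd r (ub _ _ (hne x y hxy e))
        · refine ⟨e, ?_⟩
          rw [if_neg e] at r
          by_contra hc
          rw [if_pos (by simpa using hc)] at r
          exact hab r
      · simp only [h1, h2, if_false]
        refine (h.2.2 i).fib (fun x y hxy r => ?_)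
        by_cases e : x.1 = y.1
        · rw [if_pos e] at r
          exact ⟨e, r⟩
        · rw [if_neg e] at r
          split_ifs at r
          · exact absurd r.symm h1
          · exact absurd r.symm h2

def Lo (N : ℕ) (lev : ℕ → ℕ) : Prop := ∃ c : Fin N → Fin N → ℕ, LGood c lev

lemma Lo.prod {N q : ℕ} {lev : ℕ → ℕ} (h : Lo N lev)
    {g : Fin q → Fin q → Bool} (hg : ∀ u v, g u v = g v u) {a b la lb : ℕ} (hab : a ≠ b)
    (hla : 2 ≤ la) (hlb : 2 ≤ lb)
    (ha : NoL (fun u v => g u v = true) la) (hb : NoL (fun u v => g u v = false) lb)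
    (ea : lev a = 0) (eb : lev b = 0) :
    Lo (q * N) (fun i => if i = a then la else if i = b then lb else lev i) := by
  obtain ⟨c, hc⟩ := h
  exact ⟨_, (hc.prod hg hab hla hlb ha hb ea eb).comap
    (finProdFinEquiv (m := q) (n := N)).symm.injective⟩

/-- Circulant gadgets. -/
def cg (q : ℕ) (D : List ℕ) (u v : Fin q) : Bool := D.contains ((v.val + q - u.val) % q)

lemma gad5 : (∀ u v, cg 5 [1, 4] u v = cg 5 [1, 4] v u) ∧
    NoL (fun u v => cg 5 [1, 4] u v = true) 2 ∧ NoL (fun u v => cg 5 [1, 4] u v = false) 2 := by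
  refine ⟨by decide +kernel, ?_, ?_⟩ <;> simp only [NoL] <;> decide +kernel

lemma gad8 : (∀ u v, cg 8 [1, 7, 4] u v = cg 8 [1, 7, 4] v u) ∧
    NoL (fun u v => cg 8 [1, 7, 4] u v = true) 2 ∧
    NoL (fun u v => cg 8 [1, 7, 4] u v = false) 3 := by
  refine ⟨by decide +kernel, ?_, ?_⟩ <;> simp only [NoL] <;> decide +kernel

lemma gad17 : (∀ u v, cg 17 [1, 2, 4, 8, 9, 13, 15, 16] u v = cg 17 [1, 2, 4, 8, 9, 13, 15, 16] v u) ∧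
    NoL (fun u v => cg 17 [1, 2, 4, 8, 9, 13, 15, 16] u v = true) 3 ∧
    NoL (fun u v => cg 17 [1, 2, 4, 8, 9, 13, 15, 16] u v = false) 3 := by
  refine ⟨by decide +kernel, ?_, ?_⟩ <;> simp only [NoL] <;> decide +kernel

lemma gad4 : (∀ u v, cg 4 [1, 3] u v = cg 4 [1, 3] v u) ∧
    NoL (fun u v => cg 4 [1, 3] u v = true) 2 ∧ NoL (fun u v => cg 4 [1, 3] u v = false) 1 := by
  refine ⟨by decide +kernel, ?_, ?_⟩ <;> simp only [NoL] <;> decide +kernel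

lemma gad6 : (∀ u v, cg 6 [3] u v = cg 6 [3] v u) ∧
    NoL (fun u v => cg 6 [3] u v = true) 1 ∧ NoL (fun u v => cg 6 [3] u v = false) 3 := by
  refine ⟨by decide +kernel, ?_, ?_⟩ <;> simp only [NoL] <;> decide +kernel

def levf (r s R S i : ℕ) : ℕ :=
  if i < R then 3 else if r ≤ i ∧ i < r + S then 2 else if i = r + s then 1 else 0

lemma low0 (m : ℕ) : Lo 6 (levf (2 * m + 1) 0 1 0) := by
  have h := LGood.base (a := 2 * m + 1) (b := 0) gad6.1 (by omega) gad6.2.1 gad6.2.2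
  have h2 : Lo 6 _ := ⟨_, h⟩
  convert h2 using 1
  funext i
  unfold levf
  split_ifs <;> omega

lemma low1 (m l : ℕ) : Lo 32 (levf (2 * m + 1) (2 * l + 2) 1 2) := by
  have h := LGood.base (a := 2 * m + 1) (b := 2 * m + 1 + (2 * l + 2)) gad4.1 (by omega)
    gad4.2.1 gad4.2.2
  have h' : Lo 4 _ := ⟨_, h⟩
  have h2 := h'.prod (a := 2 * m + 2) (b := 0) gad8.1 (by omega) (by omega) (by omega)
    gad8.2.1 gad8.2.2 (by split_ifs <;> omega) (by split_ifs <;> omega)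
  convert h2 using 1
  funext i
  unfold levf
  split_ifs <;> omega

lemma low2 (m l : ℕ) : ∀ j, j ≤ l → Lo (32 * 5 ^ j) (levf (2 * m + 1) (2 * l + 2) 1 (2 * j + 2))
  | 0, _ => low1 m l
  | j + 1, hj => by
    have h2 := (low2 m l j (by omega)).prod (a := 2 * m + 1 + (2 * j + 2))
      (b := 2 * m + 1 + (2 * j + 3)) gad5.1 (by omega) (by omega) (by omega)
      gad5.2.1 gad5.2.2 (by unfold levf; split_ifs <;> omega) (by unfold levf; split_ifs <;> omega)
    convert h2 using 1
    · ring
    · funext i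
      unfold levf
      split_ifs <;> omega

lemma low3 {m s N : ℕ} (h : Lo N (levf (2 * m + 1) s 1 s)) :
    ∀ j, j ≤ m → Lo (17 ^ j * N) (levf (2 * m + 1) s (2 * j + 1) s)
  | 0, _ => by simpa using h
  | j + 1, hj => by
    have h2 := (low3 h j (by omega)).prod (a := 2 * j + 1) (b := 2 * j + 2) gad17.1 (by omega)
      (by omega) (by omega) gad17.2.1 gad17.2.2
      (by unfold levf; split_ifs <;> omega) (by unfold levf; split_ifs <;> omega)
    convert h2 using 1
    · ring
    · funext i
      unfold levf
      split_ifs <;> omega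

lemma oo_even : ∀ l, oo (2 * l + 2) = 32 * 5 ^ l
  | 0 => rfl
  | l + 1 => by
    have e : oo (2 * (l + 1) + 2) = 5 * oo (2 * l + 2) := rfl
    rw [e, oo_even l]
    ring

lemma FF_odd (s : ℕ) : ∀ m, FF s (2 * m + 1) = 17 ^ m * oo s
  | 0 => by simp [FF]
  | m + 1 => by
    have e : FF s (2 * (m + 1) + 1) = 17 * FF s (2 * m + 1) := rfl
    rw [e, FF_odd s m]
    ring

lemma low_main {s r : ℕ} (hs : Even s) (hr : Odd r) : Lo (FF s r) (levf r s r s) := by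
  obtain ⟨m, rfl⟩ := hr
  rw [FF_odd]
  apply low3 _ m le_rfl
  obtain ⟨l, rfl⟩ := hs
  rcases l with _ | l
  · exact low0 m
  · rw [show l + 1 + (l + 1) = 2 * l + 2 by ring, oo_even]
    exact low2 m l l le_rfl

lemma floor_val {s r : ℕ} (hs : Even s) (hr : Odd r) :
    ⌊32 * (5 : ℝ) ^ (((s : ℝ) - 2) / 2)⌋₊ * 17 ^ ((r - 1) / 2) = FF s r := by
  obtain ⟨m, rfl⟩ := hr
  rw [FF_odd, show (2 * m + 1 - 1) / 2 = m by omega, mul_comm]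
  congr 1
  obtain ⟨l, rfl⟩ := hs
  rcases l with _ | l
  · have : (((0 + 0 : ℕ) : ℝ) - 2) / 2 = -1 := by norm_num
    rw [this, Real.rpow_neg_one]
    rw [show oo (0 + 0) = 6 from rfl, Nat.floor_eq_iff (by norm_num)]
    norm_num
  · rw [show l + 1 + (l + 1) = 2 * l + 2 by ring, oo_even]
    have : (((2 * l + 2 : ℕ) : ℝ) - 2) / 2 = (l : ℝ) := by push_cast; ring
    rw [this, Real.rpow_natCast]
    have : (32 * (5 : ℝ) ^ l) = ((32 * 5 ^ l : ℕ) : ℝ) := by push_cast; ring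
    rw [this, Nat.floor_natCast]

lemma up1 {n k : ℕ} {c : Fin n → Fin n → Fin k} {i : Fin k} (hs : ∀ u v, c u v = c v u)
    (h : ¬ HasMonoCopy GP3 c i) : MFree c i 1 Finset.univ := by
  intro v _
  change (nbh c i Finset.univ v).card ≤ 1
  by_contra hc
  push Not at hc
  obtain ⟨a, ha, b, hb, hab⟩ := Finset.one_lt_card.1 hc
  rw [mem_nbh] at ha hb
  obtain ⟨-, hav, ca⟩ := ha
  obtain ⟨-, hbv, cb⟩ := hb
  have ca' := (hs a v).trans ca
  have cb' := (hs b v).trans cb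
  refine h ⟨![a, v, b], ?_, ?_⟩
  · intro x y hxy
    fin_cases x <;> fin_cases y <;> simp_all
  · intro x y hxy
    simp only [GP3, SimpleGraph.fromRel_adj] at hxy
    fin_cases x <;> fin_cases y <;> simp_all

lemma up2 {n k : ℕ} {c : Fin n → Fin n → Fin k} {i : Fin k} (hs : ∀ u v, c u v = c v u)
    (h : ¬ HasMonoCopy GK3 c i) : MFree c i 2 Finset.univ := by
  intro v _ w hw
  change (nbh c i (nbh c i Finset.univ v) w).card ≤ 1
  by_contra hc
  push Not at hc
  obtain ⟨a, ha, -⟩ := Finset.one_lt_card.1 hc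
  rw [mem_nbh, mem_nbh] at ha
  rw [mem_nbh] at hw
  obtain ⟨⟨-, hav, c1⟩, haw, c2⟩ := ha
  obtain ⟨-, hwv, c3⟩ := hw
  have c1' := (hs a v).trans c1
  have c2' := (hs a w).trans c2
  have c3' := (hs w v).trans c3
  refine h ⟨![a, v, w], ?_, ?_⟩
  · intro x y hxy
    fin_cases x <;> fin_cases y <;> simp_all
  · intro x y hxy
    simp only [GK3, SimpleGraph.top_adj] at hxy
    fin_cases x <;> fin_cases y <;> simp_all

lemma up3 {n k : ℕ} {c : Fin n → Fin n → Fin k} {i : Fin k} (hs : ∀ u v, c u v = c v u)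
    (h : ¬ HasMonoCopy GH3 c i) : MFree c i 3 Finset.univ := by
  intro v _ w hw z hz
  change (nbh c i (nbh c i (nbh c i Finset.univ v) w) z).card ≤ 1
  by_contra hc
  push Not at hc
  obtain ⟨a, ha, b, hb, hab⟩ := Finset.one_lt_card.1 hc
  rw [mem_nbh, mem_nbh, mem_nbh] at ha hb
  rw [mem_nbh, mem_nbh] at hz
  rw [mem_nbh] at hw
  obtain ⟨⟨⟨-, n1, c1⟩, n2, c2⟩, n3, c3⟩ := ha
  obtain ⟨⟨⟨-, n4, c4⟩, n5, c5⟩, n6, c6⟩ := hb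
  obtain ⟨⟨-, n7, c7⟩, n8, c8⟩ := hz
  obtain ⟨-, n9, c9⟩ := hw
  have d1 := (hs _ _).trans c1
  have d2 := (hs _ _).trans c2
  have d3 := (hs _ _).trans c3
  have d4 := (hs _ _).trans c4
  have d5 := (hs _ _).trans c5
  have d6 := (hs _ _).trans c6
  have d7 := (hs _ _).trans c7
  have d8 := (hs _ _).trans c8
  have d9 := (hs _ _).trans c9
  clear hc
  refine h ⟨![a, b, v, w, z], ?_, ?_⟩
  · intro x y hxy
    fin_cases x <;> fin_cases y <;> simp_all
  · intro x y hxy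
    simp only [GH3, SimpleGraph.sdiff_adj, SimpleGraph.top_adj, SimpleGraph.fromRel_adj] at hxy
    fin_cases x <;> fin_cases y <;> simp_all

lemma card_lt_fin {k m : ℕ} (h : m ≤ k) :
    (Finset.univ.filter (fun i : Fin k => (i : ℕ) < m)).card = m := by
  rw [Fin.card_filter_val_lt]
  omega

def tt (k s r : ℕ) (i : Fin k) : ℕ := if (i : ℕ) < r then 3 else if (i : ℕ) < r + s then 2 else 1

lemma cnt3 {k s r : ℕ} (h : s + r < k) : cnt (tt k s r) 3 = r := by
  have : cnt (tt k s r) 3 = (Finset.univ.filter (fun i : Fin k => (i : ℕ) < r)).card := by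
    unfold cnt
    congr 1
    ext i
    simp only [Finset.mem_filter, Finset.mem_univ, true_and]
    unfold tt
    split_ifs <;> simp_all
  rw [this, card_lt_fin (by omega)]

lemma cnt2 {k s r : ℕ} (h : s + r < k) : cnt (tt k s r) 2 = s := by
  have e1 := cnt3 h
  have e2 := card_lt_fin (k := k) (m := r + s) (by omega)
  have : (Finset.univ.filter (fun i : Fin k => (i : ℕ) < r + s)) =
      (Finset.univ.filter (fun i : Fin k => tt k s r i = 3)) ∪
      (Finset.univ.filter (fun i : Fin k => tt k s r i = 2)) := by
    ext i
    simp only [Finset.mem_union, Finset.mem_filter, Finset.mem_univ, true_and]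
    unfold tt
    split_ifs <;> simp <;> omega
  rw [this, Finset.card_union_of_disjoint] at e2
  · unfold cnt at e1 ⊢
    omega
  · rw [Finset.disjoint_left]
    intro i hi hj
    rw [Finset.mem_filter] at hi hj
    omega

lemma mix1 {k s r : ℕ} {i : Fin k} (h : (i : ℕ) < r) : mixPKH k s r i = ⟨Fin 5, GH3⟩ := by
  unfold mixPKH
  rw [if_pos h]

lemma mix2 {k s r : ℕ} {i : Fin k} (h : ¬ (i : ℕ) < r) (h' : (i : ℕ) < r + s) :
    mixPKH k s r i = ⟨Fin 3, GK3⟩ := by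
  unfold mixPKH
  rw [if_neg h, if_pos h']

lemma mix3 {k s r : ℕ} {i : Fin k} (h : ¬ (i : ℕ) < r) (h' : ¬ (i : ℕ) < r + s) :
    mixPKH k s r i = ⟨Fin 3, GP3⟩ := by
  unfold mixPKH
  rw [if_neg h, if_neg h']

lemma upper {k s r : ℕ} (h : s + r < k) (c : Fin (FF s r + 1) → Fin (FF s r + 1) → Fin k)
    (hc : IsGallaiColoring c) : ∃ i : Fin k, HasMonoCopy (mixPKH k s r i).2 c i := by
  by_contra hcon
  push Not at hcon
  have hG : GalOn c Finset.univ := by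
    refine ⟨hc.1, fun u _ v _ w _ h1 h2 h3 => ?_⟩
    by_contra h4
    push Not at h4
    exact hc.2 ⟨u, v, w, h1, h2, h3, h4⟩
  have := main_upper _ Finset.univ (tt k s r) rfl hG
    (fun i => by unfold tt; split_ifs <;> omega) (fun i => by
      have hi := hcon i
      by_cases g1 : (i : ℕ) < r
      · rw [mix1 g1] at hi
        have e : tt k s r i = 3 := by simp [tt, g1]
        rw [e]
        exact up3 hc.1 hi
      · by_cases g2 : (i : ℕ) < r + s
        · rw [mix2 g1 g2] at hi
          have e : tt k s r i = 2 := by simp [tt, g1, g2]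
          rw [e]
          exact up2 hc.1 hi
        · rw [mix3 g1 g2] at hi
          have e : tt k s r i = 1 := by simp [tt, g1, g2]
          rw [e]
          exact up1 hc.1 hi)
  rw [cnt2 h, cnt3 h, Finset.card_univ, Fintype.card_fin] at this
  omega

lemma lower {k s r n : ℕ} (h : s + r < k) (hs : Even s) (hr : Odd r) (hn : n ≤ FF s r) :
    ∃ c : Fin n → Fin n → Fin k, IsGallaiColoring c ∧
      ∀ i : Fin k, ¬ HasMonoCopy (mixPKH k s r i).2 c i := by
  obtain ⟨c0, h0⟩ := low_main hs hr
  have hL := h0.comap (Fin.castLE_injective hn)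
  set c : Fin n → Fin n → ℕ := fun x y => c0 (Fin.castLE hn x) (Fin.castLE hn y) with hcdef
  clear_value c
  have hb : ∀ u v, u ≠ v → c u v < k := by
    intro u v huv
    by_contra hk
    have := hL.2.2 (c u v)
    have e : levf r s r s (c u v) = 0 := by
      unfold levf
      split_ifs <;> omega
    rw [e] at this
    exact this u v huv rfl
  refine ⟨fun u v => if huv : u = v then ⟨0, by omega⟩ else ⟨c u v, hb u v huv⟩, ⟨?_, ?_⟩, ?_⟩
  · intro u v
    by_cases huv : u = v
    · simp [huv]
    · simp [huv, Ne.symm huv, hL.1 u v]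
  · rintro ⟨u, v, w, h1, h2, h3, h4, h5, h6⟩
    simp only [h1, h2, h3, dif_neg, not_false_eq_true, ne_eq, Fin.mk.injEq] at h4 h5 h6
    rcases hL.2.1 u v w h1 h2 h3 with h | h | h
    · exact h4 h
    · exact h5 h
    · exact h6 h
  · rintro i hi
    have key : ∀ {u v : Fin n}, u ≠ v →
        (if huv : u = v then (⟨0, by omega⟩ : Fin k) else ⟨c u v, hb u v huv⟩) = i →
        c u v = (i : ℕ) := by
      intro u v huv e
      rw [dif_neg huv] at e
      rw [← e]
    have hLi := hL.2.2 i
    by_cases g1 : (i : ℕ) < r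
    · rw [mix1 g1] at hi
      obtain ⟨f, hf, hadj⟩ := hi
      dsimp only at f hf hadj
      have e : levf r s r s i = 3 := by
        unfold levf
        split_ifs <;> omega
      rw [e] at hLi
      have a : ∀ x y : Fin 5, x ≠ y → GH3.Adj x y → c (f x) (f y) = i := fun x y hxy hA =>
        key (hf.ne hxy) (hadj x y hA)
      have g : ∀ x y : Fin 5, x ≠ y → x ≠ 0 → y ≠ 0 → GH3.Adj x y := by
        intro x y h1 h2 h3
        simp [GH3, SimpleGraph.fromRel_adj, h1, h2, h3]
      exact hLi (f 1) (f 2) (hf.ne (by decide)) (a _ _ (by decide) (g _ _ (by decide) (by decide) (by decide)))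
        (f 3) (hf.ne (by decide)) (hf.ne (by decide))
        (a _ _ (by decide) (g _ _ (by decide) (by decide) (by decide)))
        (a _ _ (by decide) (g _ _ (by decide) (by decide) (by decide)))
        (f 4) (hf.ne (by decide)) (hf.ne (by decide)) (hf.ne (by decide))
        (a _ _ (by decide) (g _ _ (by decide) (by decide) (by decide)))
        (a _ _ (by decide) (g _ _ (by decide) (by decide) (by decide)))
        (a _ _ (by decide) (g _ _ (by decide) (by decide) (by decide)))
    by_cases g2 : (i : ℕ) < r + s
    · rw [mix2 g1 g2] at hi
      obtain ⟨f, hf, hadj⟩ := hi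
      dsimp only at f hf hadj
      have e : levf r s r s i = 2 := by
        unfold levf
        split_ifs <;> omega
      rw [e] at hLi
      have a : ∀ x y : Fin 3, x ≠ y → c (f x) (f y) = i := fun x y hxy =>
        key (hf.ne hxy) (hadj x y (by simpa [GK3] using hxy))
      exact hLi (f 0) (f 1) (hf.ne (by decide)) (a _ _ (by decide)) (f 2) (hf.ne (by decide))
        (hf.ne (by decide)) (a _ _ (by decide)) (a _ _ (by decide))
    by_cases g3 : (i : ℕ) = r + s
    · rw [mix3 g1 g2] at hi
      obtain ⟨f, hf, hadj⟩ := hi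
      dsimp only at f hf hadj
      have e : levf r s r s i = 1 := by
        unfold levf
        split_ifs <;> omega
      rw [e] at hLi
      exact hLi (f 0) (f 1) (hf.ne (by decide))
        (key (hf.ne (by decide)) (hadj 0 1 (by simp [GP3, SimpleGraph.fromRel_adj])))
        (f 2) (hf.ne (by decide)) (hf.ne (by decide))
        (key (hf.ne (by decide)) (hadj 1 2 (by simp [GP3, SimpleGraph.fromRel_adj])))
    · rw [mix3 g1 g2] at hi
      obtain ⟨f, hf, hadj⟩ := hi
      dsimp only at f hf hadj
      have e : levf r s r s i = 0 := by
        unfold levf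
        split_ifs <;> omega
      rw [e] at hLi
      have := hLi (f 0) (f 1) (hf.ne (by decide))
      exact this (key (hf.ne (by decide)) (hadj 0 1 (by simp [GP3, SimpleGraph.fromRel_adj])))

end GRaux


/-- Theorem 1.5, case (b₈): s even, r odd and s + r < k implies
GR_k((k-s-r)P₃, sK₃, rH₃) = ⌊32·5^((s-2)/2)⌋·17^((r-1)/2) + 1, where the floor is of
the real number 32·5^((s-2)/2). -/
theorem GR_mixPKH_b8 (k s r : ℕ) (hk : 1 ≤ k) (hs : Even s) (hr : Odd r)
    (hsr : s + r < k) :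
    GR k (mixPKH k s r) =
      ⌊32 * (5 : ℝ) ^ (((s : ℝ) - 2) / 2)⌋₊ * 17 ^ ((r - 1) / 2) + 1 := by
  rw [floor_val hs hr]
  unfold GR
  apply le_antisymm
  · exact Nat.sInf_le (fun c hc => upper hsr c hc)
  · refine le_csInf ⟨FF s r + 1, fun c hc => upper hsr c hc⟩ (fun n hn => ?_)
    by_contra hlt
    obtain ⟨c, hc, hno⟩ := lower (n := n) hsr hs hr (by omega)
    obtain ⟨i, hi⟩ := hn c hc
    exact hno i hi
end

section
/- Let c be a k-edge-coloring of the complete graph K_n, let i be a color, and let X1 and X2 be disjoint vertex sets such that every edge with one endpoint in X1 and one in X2 is colored i. If there exist two vertices of X1 joined by an edge colored i, there exist two vertices of X2 joined by an edge colored i, and |X1 ∪ X2| ≥ 5, then K_n contains a monochromatic copy of H1 in color i and a monochromatic copy of H2 in color i. -/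
open SimpleGraph

theorem mono_copy_aux {n k : ℕ} (c : Fin n → Fin n → Fin k)
    (hsymm : ∀ u v, c u v = c v u) (i : Fin k) (a b x y e : Fin n)
    (hab : a ≠ b) (hax : a ≠ x) (hay : a ≠ y) (hae : a ≠ e) (hbx : b ≠ x) (hby : b ≠ y)
    (hbe : b ≠ e) (hxy : x ≠ y) (hxe : x ≠ e) (hye : y ≠ e)
    (cab : c a b = i) (cax : c a x = i) (cay : c a y = i) (cbx : c b x = i)
    (cby : c b y = i) (cxy : c x y = i) (cex : c e x = i) (cey : c e y = i) :
    HasMonoCopy GH1 c i ∧ HasMonoCopy GH2 c i := by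
  have cba := hsymm a b ▸ cab
  have cxa := hsymm a x ▸ cax
  have cya := hsymm a y ▸ cay
  have cxb := hsymm b x ▸ cbx
  have cyb := hsymm b y ▸ cby
  have cyx := hsymm x y ▸ cxy
  have cxe := hsymm e x ▸ cex
  have cye := hsymm e y ▸ cey
  refine ⟨⟨![a, b, y, x, e], ?_, ?_⟩, ⟨![a, e, b, x, y], ?_, ?_⟩⟩
  · intro p q h
    fin_cases p <;> fin_cases q <;> simp_all [eq_comm]
  · intro p q h
    fin_cases p <;> fin_cases q <;> simp_all [GH1]
  · intro p q h
    fin_cases p <;> fin_cases q <;> simp_all [eq_comm]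
  · intro p q h
    fin_cases p <;> fin_cases q <;> simp_all [GH2]

/-- Condition 1: if all edges between the disjoint sets `X₁` and `X₂` are colored `i`,
both `X₁` and `X₂` contain an edge of color `i`, and `|X₁ ∪ X₂| ≥ 5`, then there are
monochromatic copies of `H₁` and of `H₂` in color `i`. -/
theorem mono_copy_of_cross_condition1 (n k : ℕ) (c : Fin n → Fin n → Fin k)
    (hsymm : ∀ u v, c u v = c v u) (i : Fin k)
    (X1 X2 : Finset (Fin n)) (hdisj : Disjoint X1 X2)
    (hcross : ∀ u ∈ X1, ∀ v ∈ X2, c u v = i)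
    (h1 : ∃ u ∈ X1, ∃ v ∈ X1, u ≠ v ∧ c u v = i)
    (h2 : ∃ u ∈ X2, ∃ v ∈ X2, u ≠ v ∧ c u v = i)
    (hcard : 5 ≤ (X1 ∪ X2).card) :
    HasMonoCopy GH1 c i ∧ HasMonoCopy GH2 c i := by
  obtain ⟨a, ha, b, hb, hab, cab⟩ := h1
  obtain ⟨x, hx, y, hy, hxy, cxy⟩ := h2
  have hne : ∀ u ∈ X1, ∀ v ∈ X2, u ≠ v := fun u hu v hv =>
    Finset.disjoint_iff_ne.mp hdisj u hu v hv
  obtain ⟨e, he, hne'⟩ : ∃ e ∈ X1 ∪ X2, e ∉ ({a, b, x, y} : Finset (Fin n)) := by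
    apply Finset.exists_mem_notMem_of_card_lt_card
    exact lt_of_le_of_lt Finset.card_le_four (by omega)
  simp only [Finset.mem_insert, Finset.mem_singleton, not_or] at hne'
  obtain ⟨ea, eb, ex, ey⟩ := hne'
  rcases Finset.mem_union.mp he with he | he
  · exact mono_copy_aux c hsymm i a b x y e hab (hne _ ha _ hx) (hne _ ha _ hy) (Ne.symm ea)
      (hne _ hb _ hx) (hne _ hb _ hy) (Ne.symm eb) hxy (Ne.symm ex) (Ne.symm ey) cab
      (hcross _ ha _ hx) (hcross _ ha _ hy) (hcross _ hb _ hx) (hcross _ hb _ hy) cxy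
      (hcross _ he _ hx) (hcross _ he _ hy)
  · exact mono_copy_aux c hsymm i x y a b e hxy (hne _ ha _ hx).symm (hne _ hb _ hx).symm
      (Ne.symm ex) (hne _ ha _ hy).symm (hne _ hb _ hy).symm (Ne.symm ey) hab
      (Ne.symm ea) (Ne.symm eb) cxy
      ((hsymm _ _).trans (hcross _ ha _ hx)) ((hsymm _ _).trans (hcross _ hb _ hx))
      ((hsymm _ _).trans (hcross _ ha _ hy)) ((hsymm _ _).trans (hcross _ hb _ hy)) cab
      ((hsymm _ _).trans (hcross _ ha _ he)) ((hsymm _ _).trans (hcross _ hb _ he))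
end
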